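/- Let ε > 0 and let α₁, …, α_K be sub-Gaussian probability measures on ℝ^d, and let w₁, …, w_K be nonnegative reals summing to 1. A sub-Gaussian probability measure α⋆ on ℝ^d minimizes α ↦ Σ_{k=1}^K w_k S_ε(α_k, α) over all sub-Gaussian probability measures if and only if there exist continuous functions f₁, …, f_K, g₁, …, g_K, h : ℝ^d → ℝ, each integrable with respect to every sub-Gaussian probability measure, such that for every k: exp(f_k(x)/ε) · ∫ exp((g_k(y) − ‖x − y‖²)/ε) dα⋆(y) = 1 for all x ∈ ℝ^d, exp(g_k(y)/ε) · ∫ exp((f_k(x) − ‖x − y‖²)/ε) dα_k(x) = 1 for all y ∈ ℝ^d, exp(h(x)/ε) · ∫ exp((h(y) − ‖x − y‖²)/ε) dα⋆(y) = 1 for all x ∈ ℝ^d, and ∫ (Σ_{k=1}^K w_k g_k − h) d(β − α⋆) ≥ 0 for every sub-Gaussian probability measure β on ℝ^d. -/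

import Mathlib

/-! Expanding `‖x - y‖²` and setting `s = 2 / ε`, `f = ‖·‖² - ε A`, `g = ‖·‖² - ε B` turns the Sinkhorn
equations into the log-Laplace form `exp (A x) = ∫ exp (s ⟪y, x⟫ - B y) dβ(y)` and its mirror image
(`Half`, `sink_iff`). Every solution of interest is convex with explicit growth bounds (`Pot`), and
this gives compactness by Arzelà–Ascoli (`Pot.exists_subseq`).

* Existence (`exists_solution`): minimize the dual functional over a normalized compact class that
  is stable under Sinkhorn iteration. Each iteration decreases the functional, strictly unless it is
  stationary (`update_mono`, an instance of Jensen's inequality), so a minimizer is a fixed point.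
  The growth constants depend on the marginals only through their sub-Gaussian constants.
* Uniqueness up to constants (`solution_unique`), and hence, by compactness, stability of potentials
  along segments of measures (`solution_stable`) and existence of a self-potential `h` of `α` by
  symmetry (`exists_self_solution`).
* Duality (`le_OTe`, `OTe_eq`): `∫ f dα + ∫ g dβ` is at most `OT_ε(α, β)` as soon as one of the two
  Sinkhorn equations holds, with equality when both hold. This uses the inequality of
  Donsker–Varadhan, and optimality of the Gibbs plan.
* Convexity of the debiased objective: `-½ OT_ε(α, α) = -∫ h dα` is convex. Indeed the Gaussian kernel
  is positive semi-definite, since it is the square of a Gaussian convolution (`smooth_mul`,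
  `gibbs_psd`), which yields the subgradient inequality `self_le`.

For sufficiency, evaluate the potentials of `α⋆` at a competitor `β`: weak duality bounds
`OT_ε(αₖ, β)` from below by `∫ fₖ dαₖ + ∫ gₖ dβ`, and `self_le` bounds `-½ OT_ε(β, β)` from below by
`-∫ h dβ`. Hence the objective grows by at least `∫ (∑ wₖ gₖ - h) d(β - α⋆) ≥ 0`
(`isBary_of_potentials`).

For necessity, the same inequalities with the roles of the two measures exchanged, applied to
`α⋆` and the mixture `(1 - t) α⋆ + t β`, give the first-order inequality for the potentials of the
mixture (`variation`). Letting `t → 0`, stability transfers it to the potentials of `α⋆`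
(`first_order`).
-/

open MeasureTheory ProbabilityTheory
open scoped ENNReal Classical

/-- Kullback–Leibler divergence `KL(π ‖ ρ)`, valued in `EReal`:
`∫ log (dπ/dρ) dπ` when `π ≪ ρ` and the log-likelihood ratio is `π`-integrable,
and `⊤` otherwise. -/
noncomputable def KLdiv {X : Type*} [MeasurableSpace X] (π ρ : Measure X) : EReal :=
  if π ≪ ρ ∧ Integrable (fun x => Real.log (π.rnDeriv ρ x).toReal) π
  then ((∫ x, Real.log (π.rnDeriv ρ x).toReal ∂π : ℝ) : EReal)
  else ⊤

/-- Entropic optimal transport cost on `ℝ^d` with quadratic cost and product reference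
measure: `OT_ε(α, β) = inf { ∫ ‖x-y‖² dπ + ε KL(π ‖ α ⊗ β) }` over couplings `π`
of `α` and `β`. -/
noncomputable def OTe (d : ℕ) (ε : ℝ)
    (α β : Measure (EuclideanSpace ℝ (Fin d))) : EReal :=
  ⨅ (π : Measure (EuclideanSpace ℝ (Fin d) × EuclideanSpace ℝ (Fin d)))
    (_ : IsProbabilityMeasure π) (_ : π.fst = α) (_ : π.snd = β),
    (((∫⁻ p, ENNReal.ofReal (‖p.1 - p.2‖ ^ 2) ∂π : ℝ≥0∞) : EReal)
      + (ε : EReal) * KLdiv π (α.prod β))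

/-- A probability measure on `ℝ^d` is sub-Gaussian if `∫ exp (‖x‖²/q) dα < ∞`
for some `q > 0`. -/
def SubGaussian (d : ℕ) (α : Measure (EuclideanSpace ℝ (Fin d))) : Prop :=
  ∃ q : ℝ, 0 < q ∧ ∫⁻ x, ENNReal.ofReal (Real.exp (‖x‖ ^ 2 / q)) ∂α < ⊤

/-- Sinkhorn divergence `S_ε(α,β) = OT_ε(α,β) − ½ OT_ε(α,α) − ½ OT_ε(β,β)` on `ℝ^d`. -/
noncomputable def Sdiv (d : ℕ) (ε : ℝ)
    (α β : Measure (EuclideanSpace ℝ (Fin d))) : EReal :=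
  OTe d ε α β - ((1 / 2 : ℝ) : EReal) * OTe d ε α α
    - ((1 / 2 : ℝ) : EReal) * OTe d ε β β

namespace SinkhornBarycenter

open Set Filter Topology Real
open scoped RealInnerProductSpace

set_option linter.unusedSectionVars false

/-! ### Sub-Gaussian measures, convex potentials and the log-Laplace update -/

section Potentials

variable {E : Type*} [NormedAddCommGroup E] [InnerProductSpace ℝ E] [FiniteDimensional ℝ E]
  [MeasurableSpace E] [BorelSpace E]

/-- Quantitative sub-Gaussianity: `∫ exp (‖x‖² / q) dμ ≤ C`, with `q > 0`. -/
structure SubG (q C : ℝ) (μ : Measure E) : Prop where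
  pos : 0 < q
  one_le : 1 ≤ C
  int : Integrable (fun x => exp (‖x‖ ^ 2 / q)) μ
  le : ∫ x, exp (‖x‖ ^ 2 / q) ∂μ ≤ C

lemma linear_le_sq {q L r : ℝ} (hq : 0 < q) : L * r ≤ r ^ 2 / q + q * L ^ 2 / 4 := by
  have : r ^ 2 / q + q * L ^ 2 / 4 - L * r = (r - q * L / 2) ^ 2 / q := by
    field_simp; ring
  have h2 : 0 ≤ (r - q * L / 2) ^ 2 / q := by positivity
  linarith

lemma SubG.exp_linear {q C : ℝ} {μ : Measure E} (h : SubG q C μ) (L : ℝ) :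
    Integrable (fun x => exp (L * ‖x‖)) μ ∧
      ∫ x, exp (L * ‖x‖) ∂μ ≤ C * exp (q * L ^ 2 / 4) := by
  have hb : ∀ x : E, exp (L * ‖x‖) ≤ exp (‖x‖ ^ 2 / q) * exp (q * L ^ 2 / 4) := fun x => by
    rw [← exp_add]; exact exp_le_exp.2 (linear_le_sq h.pos)
  have hi : Integrable (fun x => exp (L * ‖x‖)) μ := by
    refine (h.int.mul_const (exp (q * L ^ 2 / 4))).mono' (by fun_prop) (ae_of_all _ fun x => ?_)
    rw [norm_of_nonneg (exp_pos _).le]; exact hb x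
  refine ⟨hi, (integral_mono hi (h.int.mul_const _) hb).trans ?_⟩
  rw [integral_mul_const]
  exact mul_le_mul_of_nonneg_right h.le (exp_pos _).le

lemma SubG.sq {q C : ℝ} {μ : Measure E} (h : SubG q C μ) :
    Integrable (fun x => ‖x‖ ^ 2) μ ∧ ∫ x, ‖x‖ ^ 2 ∂μ ≤ q * C := by
  have hq := h.pos
  have hb : ∀ x : E, ‖x‖ ^ 2 ≤ q * exp (‖x‖ ^ 2 / q) := fun x => by
    have := add_one_le_exp (‖x‖ ^ 2 / q)
    calc ‖x‖ ^ 2 = q * (‖x‖ ^ 2 / q) := by field_simp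
      _ ≤ _ := by gcongr; linarith
  have hi : Integrable (fun x => ‖x‖ ^ 2) μ := by
    refine (h.int.const_mul q).mono' (by fun_prop) (ae_of_all _ fun x => ?_)
    rw [norm_of_nonneg (by positivity)]; exact hb x
  refine ⟨hi, (integral_mono hi (h.int.const_mul _) hb).trans ?_⟩
  rw [integral_const_mul]
  exact mul_le_mul_of_nonneg_left h.le hq.le

lemma SubG.norm {q C : ℝ} {μ : Measure E} [IsProbabilityMeasure μ] (h : SubG q C μ) :
    Integrable (fun x => ‖x‖) μ ∧ ∫ x, ‖x‖ ∂μ ≤ 1 + q * C := by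
  have hb : ∀ x : E, ‖x‖ ≤ 1 + ‖x‖ ^ 2 := fun x => by nlinarith [sq_nonneg (‖x‖ - 1)]
  have hi2 : Integrable (fun x : E => 1 + ‖x‖ ^ 2) μ := (integrable_const 1).add h.sq.1
  have hi : Integrable (fun x => ‖x‖) μ := by
    refine hi2.mono' (by fun_prop) (ae_of_all _ fun x => ?_)
    rw [norm_norm]; exact hb x
  refine ⟨hi, (integral_mono hi hi2 hb).trans ?_⟩
  rw [integral_add (integrable_const _) h.sq.1]
  simpa using h.sq.2

/-- The class in which potentials are sought: convex functions bounded below by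
`-a (1 + ‖x‖)` and above by `c (1 + ‖x‖²)`. Such an `A` encodes the Sinkhorn potential
`‖x‖² - ε A x`. -/
structure Pot (a c : ℝ) (A : E → ℝ) : Prop where
  convex : ConvexOn ℝ univ A
  lower : ∀ x, -(a * (1 + ‖x‖)) ≤ A x
  upper : ∀ x, A x ≤ c * (1 + ‖x‖ ^ 2)

lemma Pot.continuous {a c : ℝ} {A : E → ℝ} (h : Pot a c A) : Continuous A :=
  h.convex.locallyLipschitz.continuous

lemma Pot.abs_le {a c : ℝ} {A : E → ℝ} (h : Pot a c A) (x : E) :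
    |A x| ≤ (2 * |a| + |c|) * (1 + ‖x‖ ^ 2) := by
  have h1 := h.lower x
  have h2 := h.upper x
  have h3 : a * (1 + ‖x‖) ≤ |a| * (1 + ‖x‖) := by
    gcongr; exact le_abs_self a
  have h4 : c * (1 + ‖x‖ ^ 2) ≤ |c| * (1 + ‖x‖ ^ 2) := by
    gcongr; exact le_abs_self c
  have h5 : |a| * (1 + ‖x‖) ≤ |a| * (2 * (1 + ‖x‖ ^ 2)) := by
    gcongr; nlinarith [sq_nonneg (‖x‖ - 1)]
  have h6 : 0 ≤ |c| * (1 + ‖x‖ ^ 2) := by positivity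
  have h7 : 0 ≤ |a| * (1 + ‖x‖ ^ 2) := by positivity
  rw [_root_.abs_le]; constructor <;> nlinarith

lemma SubG.integrable_quad {q C : ℝ} {μ : Measure E} [IsProbabilityMeasure μ] (h : SubG q C μ)
    (c : ℝ) : Integrable (fun x => c * (1 + ‖x‖ ^ 2)) μ :=
  ((integrable_const 1).add h.sq.1).const_mul c

lemma Pot.integrable {a c : ℝ} {A : E → ℝ} (h : Pot a c A) {q C : ℝ} {μ : Measure E}
    [IsProbabilityMeasure μ] (hμ : SubG q C μ) : Integrable A μ :=
  (hμ.integrable_quad (2 * |a| + |c|)).mono' h.continuous.aestronglyMeasurable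
    (ae_of_all _ h.abs_le)

/-- Potentials with fixed growth constants form a sequentially compact family for pointwise
convergence: bounded convex functions are locally equi-Lipschitz, so Arzelà–Ascoli applies. -/
lemma Pot.exists_subseq {a c : ℝ} {A : ℕ → E → ℝ} (h : ∀ n, Pot a c (A n)) :
    ∃ A' : E → ℝ, Pot a c A' ∧ ∃ φ : ℕ → ℕ, StrictMono φ ∧
      ∀ x, Tendsto (fun n => A (φ n) x) atTop (𝓝 (A' x)) := by
  let S : Set C(E, ℝ) := {F | Pot a c F}
  have himg : ContinuousMap.toFun '' S = {F : E → ℝ | Pot a c F} := by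
    ext F; constructor
    · rintro ⟨G, hG, rfl⟩; exact hG
    · intro hF; exact ⟨⟨F, hF.continuous⟩, hF, rfl⟩
  have hcl : IsClosed {F : E → ℝ | Pot a c F} := by
    have : {F : E → ℝ | Pot a c F} = {F | ConvexOn ℝ univ F} ∩
        ((⋂ x, {F | -(a * (1 + ‖x‖)) ≤ F x}) ∩ ⋂ x, {F | F x ≤ c * (1 + ‖x‖ ^ 2)}) := by
      ext F; simp only [mem_ofPred_eq, mem_inter_iff, mem_iInter]
      exact ⟨fun h => ⟨h.1, h.2, h.3⟩, fun h => ⟨h.1, h.2.1, h.2.2⟩⟩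
    rw [this]
    refine IsClosed.inter ?_ (IsClosed.inter ?_ ?_)
    · have : {F : E → ℝ | ConvexOn ℝ univ F} = ⋂ (x) (y) (s : ℝ) (t : ℝ) (_ : 0 ≤ s) (_ : 0 ≤ t)
          (_ : s + t = 1), {F | F (s • x + t • y) ≤ s • F x + t • F y} := by
        ext F; simp only [mem_ofPred_eq, mem_iInter]
        exact ⟨fun h x y s t hs ht hst => h.2 trivial trivial hs ht hst,
          fun h => ⟨convex_univ, fun x _ y _ s t hs ht hst => h x y s t hs ht hst⟩⟩
      rw [this]
      refine isClosed_iInter fun x => isClosed_iInter fun y => isClosed_iInter fun s =>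
        isClosed_iInter fun t => isClosed_iInter fun _ => isClosed_iInter fun _ =>
        isClosed_iInter fun _ => isClosed_le (by fun_prop) (by fun_prop)
    · exact isClosed_iInter fun x => isClosed_le (by fun_prop) (by fun_prop)
    · exact isClosed_iInter fun x => isClosed_le (by fun_prop) (by fun_prop)
  have hcomp : IsCompact S := by
    apply ArzelaAscoli.isCompact_of_equicontinuous
    · rw [himg]
      refine (isCompact_univ_pi fun x : E => isCompact_Icc
        (a := -(a * (1 + ‖x‖))) (b := c * (1 + ‖x‖ ^ 2))).of_isClosed_subset hcl ?_
      intro F hF x _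
      have hF' : Pot a c F := hF
      exact ⟨hF'.lower x, hF'.upper x⟩
    · intro x₀
      have hlip : ∀ F : S, LipschitzOnWith
          (2 * ((2 * |a| + |c|) * (1 + (‖x₀‖ + 2) ^ 2)) / 1).toNNReal F.1
          (Metric.ball x₀ (2 - 1)) := fun F => by
        refine (F.2.convex.subset (subset_univ _) (convex_ball _ _)).lipschitzOnWith_of_abs_le
          one_pos fun x hx => (F.2.abs_le x).trans ?_
        have : ‖x‖ ≤ ‖x₀‖ + 2 := by
          have := norm_le_norm_add_norm_sub' x x₀
          rw [← dist_eq_norm] at this; linarith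
        gcongr
      set K := (2 * ((2 * |a| + |c|) * (1 + (‖x₀‖ + 2) ^ 2)) / 1).toNNReal
      rw [Metric.equicontinuousAt_iff]
      intro e he
      refine ⟨min 1 (e / (K + 1)), by positivity, fun x hx F => ?_⟩
      have h1 : dist x x₀ < 1 := hx.trans_le (min_le_left _ _)
      have h2 : dist x x₀ < e / (K + 1) := hx.trans_le (min_le_right _ _)
      have := (hlip F).dist_le_mul x₀ (Metric.mem_ball_self (by norm_num)) x
        (by rw [Metric.mem_ball]; linarith)
      refine this.trans_lt ?_
      rw [dist_comm x₀ x]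
      rw [lt_div_iff₀ (by positivity)] at h2
      have h0 : 0 ≤ dist x x₀ := dist_nonneg
      nlinarith
  obtain ⟨A', hA', φ, hφ, hlim⟩ := hcomp.tendsto_subseq
    (x := fun n => (⟨A n, (h n).continuous⟩ : C(E, ℝ))) (fun n => h n)
  refine ⟨A', hA', φ, hφ, fun x => ?_⟩
  exact ((ContinuousEvalConst.continuous_eval_const x).tendsto A').comp hlim

/-- Integrability of the log-Laplace integrand, with an explicit majorant. Only the lower bound on
the potential matters. -/
lemma SubG.integrable_exp {q C : ℝ} {μ : Measure E} (hμ : SubG q C μ) {a : ℝ} {A : E → ℝ}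
    (hA : Continuous A) (hlow : ∀ x, -(a * (1 + ‖x‖)) ≤ A x) {s : ℝ} (hs : 0 ≤ s) (y : E) :
    Integrable (fun x => exp (s * ⟪x, y⟫ - A x)) μ ∧
      ∀ x, exp (s * ⟪x, y⟫ - A x) ≤ exp a * exp ((s * ‖y‖ + a) * ‖x‖) := by
  have hb : ∀ x, exp (s * ⟪x, y⟫ - A x) ≤ exp a * exp ((s * ‖y‖ + a) * ‖x‖) := fun x => by
    rw [← exp_add]
    have h1 := hlow x
    have h2 := mul_le_mul_of_nonneg_left (real_inner_le_norm x y) hs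
    exact exp_le_exp.2 (by nlinarith)
  refine ⟨((hμ.exp_linear (s * ‖y‖ + a)).1.const_mul (exp a)).mono' (by fun_prop)
    (ae_of_all _ fun x => ?_), hb⟩
  rw [norm_of_nonneg (exp_pos _).le]; exact hb x

/-- The Sinkhorn update `A ↦ log ∫ exp (s ⟪x, ·⟫ - A x) dμ(x)`, a log-Laplace transform. -/
noncomputable def logLap (s : ℝ) (μ : Measure E) (A : E → ℝ) (y : E) : ℝ :=
  log (∫ x, exp (s * ⟪x, y⟫ - A x) ∂μ)

section update

variable {q C : ℝ} {μ : Measure E} [IsProbabilityMeasure μ] {a : ℝ} {A : E → ℝ} {s : ℝ}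

lemma exp_logLap (hμ : SubG q C μ) (hA : Continuous A) (hlow : ∀ x, -(a * (1 + ‖x‖)) ≤ A x)
    (hs : 0 ≤ s) (y : E) : exp (logLap s μ A y) = ∫ x, exp (s * ⟪x, y⟫ - A x) ∂μ :=
  exp_log (integral_exp_pos (hμ.integrable_exp hA hlow hs y).1)

lemma convexOn_logLap (hμ : SubG q C μ) (hA : Continuous A) (hlow : ∀ x, -(a * (1 + ‖x‖)) ≤ A x)
    (hs : 0 ≤ s) : ConvexOn ℝ univ (logLap s μ A) := by
  refine ⟨convex_univ, fun y _ z _ p r hp hr hpr => ?_⟩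
  have hiy := (hμ.integrable_exp hA hlow hs y).1
  have hiz := (hμ.integrable_exp hA hlow hs z).1
  have hiw := (hμ.integrable_exp hA hlow hs (p • y + r • z)).1
  set Y := logLap s μ A y
  set Z := logLap s μ A z
  have hY : exp Y = _ := exp_logLap hμ hA hlow hs y
  have hZ : exp Z = _ := exp_logLap hμ hA hlow hs z
  have key : ∫ x, exp (s * ⟪x, p • y + r • z⟫ - A x) ∂μ ≤ exp (p • Y + r • Z) := by
    have h1 : ∀ x, exp (s * ⟪x, p • y + r • z⟫ - A x) ≤ exp (p • Y + r • Z) *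
        (p * exp (-Y) * exp (s * ⟪x, y⟫ - A x) + r * exp (-Z) * exp (s * ⟪x, z⟫ - A x)) := by
      intro x
      have h2 := convexOn_exp.2 (mem_univ (s * ⟪x, y⟫ - A x - Y)) (mem_univ (s * ⟪x, z⟫ - A x - Z))
        hp hr hpr
      simp only [smul_eq_mul] at h2 ⊢
      have h3 : s * ⟪x, p • y + r • z⟫ - A x = (p * Y + r * Z) +
          (p * (s * ⟪x, y⟫ - A x - Y) + r * (s * ⟪x, z⟫ - A x - Z)) := by
        rw [inner_add_right, inner_smul_right, inner_smul_right]
        linear_combination (-A x) * (-hpr)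
      rw [h3, exp_add]
      gcongr
      refine h2.trans_eq ?_
      rw [sub_eq_add_neg _ Y, sub_eq_add_neg _ Z, exp_add _ (-Y), exp_add _ (-Z)]; ring
    refine (integral_mono hiw (((hiy.const_mul _).add (hiz.const_mul _)).const_mul _) h1).trans_eq ?_
    rw [integral_const_mul, integral_add' (hiy.const_mul _) (hiz.const_mul _), integral_const_mul,
      integral_const_mul, ← hY, ← hZ, mul_assoc p, mul_assoc r, ← exp_add, ← exp_add]
    simp [hpr]
  rw [← log_exp (p • Y + r • Z)]
  exact log_le_log (integral_exp_pos hiw) key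

lemma logLap_le (hμ : SubG q C μ) (hA : Continuous A) (hlow : ∀ x, -(a * (1 + ‖x‖)) ≤ A x)
    (hs : 0 ≤ s) (ha : 0 ≤ a) (y : E) :
    logLap s μ A y ≤ (a + log C + q * (s ^ 2 + a ^ 2) / 2) * (1 + ‖y‖ ^ 2) := by
  obtain ⟨hi, hb⟩ := hμ.integrable_exp hA hlow hs y
  have hq := hμ.pos
  have hC : 0 < C := one_pos.trans_le hμ.one_le
  have hlC : 0 ≤ log C := log_nonneg hμ.one_le
  have h1 : ∫ x, exp (s * ⟪x, y⟫ - A x) ∂μ ≤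
      exp (a + log C + q * (s * ‖y‖ + a) ^ 2 / 4) := by
    refine (integral_mono hi ((hμ.exp_linear _).1.const_mul _) hb).trans ?_
    rw [integral_const_mul, exp_add, exp_add, exp_log hC, mul_assoc]
    exact mul_le_mul_of_nonneg_left (hμ.exp_linear _).2 (exp_pos _).le
  have h2 := log_le_log (integral_exp_pos hi) h1
  rw [log_exp] at h2
  refine h2.trans ?_
  have h3 : (s * ‖y‖ + a) ^ 2 ≤ 2 * (s ^ 2 + a ^ 2) * (1 + ‖y‖ ^ 2) := by
    nlinarith [sq_nonneg (s * ‖y‖ - a), sq_nonneg s, sq_nonneg (a * ‖y‖)]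
  have h4 : q * (s * ‖y‖ + a) ^ 2 ≤ q * (2 * (s ^ 2 + a ^ 2) * (1 + ‖y‖ ^ 2)) := by gcongr
  have h5 : 0 ≤ (a + log C) * ‖y‖ ^ 2 := by positivity
  nlinarith

lemma le_logLap (hμ : SubG q C μ) (hA : Continuous A) (hlow : ∀ x, -(a * (1 + ‖x‖)) ≤ A x)
    (hs : 0 ≤ s) (hAi : Integrable A μ) (y : E) :
    -(s * (1 + q * C) * ‖y‖) - ∫ x, A x ∂μ ≤ logLap s μ A y := by
  have hi := (hμ.integrable_exp hA hlow hs y).1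
  have hin : Integrable (fun x => s * ⟪x, y⟫) μ := by
    refine ((hμ.norm.1.mul_const ‖y‖).const_mul s).mono' (by fun_prop) (ae_of_all _ fun x => ?_)
    rw [norm_mul, norm_of_nonneg hs]
    gcongr
    exact abs_real_inner_le_norm x y
  have h1 : exp (∫ x, (s * ⟪x, y⟫ - A x) ∂μ) ≤ ∫ x, exp (s * ⟪x, y⟫ - A x) ∂μ :=
    convexOn_exp.map_integral_le continuous_exp.continuousOn isClosed_univ (by simp)
      (hin.sub hAi) hi
  have h2 := log_le_log (exp_pos _) h1
  rw [log_exp, integral_sub hin hAi] at h2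
  refine le_trans ?_ h2
  have h3 : -(s * (1 + q * C) * ‖y‖) ≤ ∫ x, s * ⟪x, y⟫ ∂μ := by
    have h4 : -∫ x, s * (‖x‖ * ‖y‖) ∂μ ≤ ∫ x, s * ⟪x, y⟫ ∂μ := by
      rw [← integral_neg]
      refine integral_mono ((hμ.norm.1.mul_const ‖y‖).const_mul s).neg hin fun x => ?_
      have := (abs_le.1 (abs_real_inner_le_norm x y)).1
      simp only
      nlinarith
    rw [integral_const_mul, integral_mul_const] at h4
    have := mul_le_mul_of_nonneg_left (mul_le_mul_of_nonneg_right hμ.norm.2 (norm_nonneg y)) hs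
    linarith
  linarith

lemma integral_exp_tendsto (hμ : SubG q C μ) {B : ℕ → E → ℝ} {c : ℝ} (hB : ∀ n, Pot a c (B n))
    (hlim : ∀ x, Tendsto (fun n => B n x) atTop (𝓝 (A x))) (hs : 0 ≤ s) (y : E) :
    Tendsto (fun n => ∫ x, exp (s * ⟪x, y⟫ - B n x) ∂μ) atTop
      (𝓝 (∫ x, exp (s * ⟪x, y⟫ - A x) ∂μ)) := by
  refine tendsto_integral_of_dominated_convergence
    (fun x => exp a * exp ((s * ‖y‖ + a) * ‖x‖))
    (fun n => (hμ.integrable_exp (hB n).continuous (hB n).lower hs y).1.aestronglyMeasurable)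
    ((hμ.exp_linear _).1.const_mul _) (fun n => ae_of_all _ fun x => ?_)
    (ae_of_all _ fun x => (continuous_exp.tendsto _).comp ((hlim x).const_sub _))
  rw [norm_of_nonneg (exp_pos _).le]
  exact (hμ.integrable_exp (hB n).continuous (hB n).lower hs y).2 x

lemma integral_tendsto (hμ : SubG q C μ) {B : ℕ → E → ℝ} {c : ℝ} (hB : ∀ n, Pot a c (B n))
    (hlim : ∀ x, Tendsto (fun n => B n x) atTop (𝓝 (A x))) :
    Tendsto (fun n => ∫ x, B n x ∂μ) atTop (𝓝 (∫ x, A x ∂μ)) :=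
  tendsto_integral_of_dominated_convergence (fun x => (2 * |a| + |c|) * (1 + ‖x‖ ^ 2))
    (fun n => (hB n).continuous.aestronglyMeasurable) (hμ.integrable_quad _)
    (fun n => ae_of_all _ (hB n).abs_le) (ae_of_all _ hlim)

lemma logLap_tendsto (hμ : SubG q C μ) {B : ℕ → E → ℝ} {c : ℝ} (hB : ∀ n, Pot a c (B n))
    (hA : Pot a c A) (hlim : ∀ x, Tendsto (fun n => B n x) atTop (𝓝 (A x))) (hs : 0 ≤ s) (y : E) :
    Tendsto (fun n => logLap s μ (B n) y) atTop (𝓝 (logLap s μ A y)) :=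
  (integral_exp_tendsto hμ hB hlim hs y).log
    (integral_exp_pos (hμ.integrable_exp hA.continuous hA.lower hs y).1).ne'

end update

end Potentials

/-! ### The Schrödinger system: existence, uniqueness, stability -/

section Schrodinger

variable {E : Type*} [NormedAddCommGroup E] [InnerProductSpace ℝ E] [FiniteDimensional ℝ E]
  [MeasurableSpace E] [BorelSpace E]

/-- The Schrödinger system in log-Laplace form, half of it: `A = log ∫ exp (s ⟪y, ·⟫ - B y) dβ(y)`
everywhere. With `s = 2 / ε`, `f = ‖·‖² - ε A`, `g = ‖·‖² - ε B`, this is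
`exp (f x / ε) * ∫ exp ((g y - ‖x - y‖²) / ε) dβ(y) = 1`. -/
def Half (s : ℝ) (β : Measure E) (A B : E → ℝ) : Prop :=
  ∀ x, exp (A x) = ∫ y, exp (s * ⟪y, x⟫ - B y) ∂β

lemma Half.integrable {s : ℝ} {β : Measure E} {A B : E → ℝ} (h : Half s β A B) (x : E) :
    Integrable (fun y => exp (s * ⟪y, x⟫ - B y)) β := by
  by_contra hn
  have := h x
  rw [integral_undef hn] at this
  exact (exp_pos _).ne' this

lemma Half.lintegral {s : ℝ} {β : Measure E} {A B : E → ℝ} (h : Half s β A B) (x : E) :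
    ∫⁻ y, ENNReal.ofReal (exp (s * ⟪x, y⟫ - A x - B y)) ∂β = 1 := by
  have h1 : ∀ y, exp (s * ⟪x, y⟫ - A x - B y) = exp (-A x) * exp (s * ⟪y, x⟫ - B y) := fun y => by
    rw [← exp_add, real_inner_comm x y]; congr 1; ring
  simp_rw [h1]
  rw [← ofReal_integral_eq_lintegral_ofReal ((h.integrable x).const_mul _)
    (ae_of_all _ fun y => by positivity), integral_const_mul, ← h x, ← exp_add]
  simp

/-- The Gibbs density `exp (s ⟪x, y⟫ - A x - B y)` of the entropic plan. -/
noncomputable def gibbs (s : ℝ) (A B : E → ℝ) (p : E × E) : ℝ≥0∞ :=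
  ENNReal.ofReal (exp (s * ⟪p.1, p.2⟫ - A p.1 - B p.2))

/-- The measure with Gibbs density relative to `α ⊗ β`. -/
noncomputable def plan (s : ℝ) (α β : Measure E) (A B : E → ℝ) : Measure (E × E) :=
  (α.prod β).withDensity (gibbs s A B)

lemma measurable_gibbs {s : ℝ} {A B : E → ℝ} (hA : Continuous A) (hB : Continuous B) :
    Measurable (gibbs s A B) :=
  ENNReal.measurable_ofReal.comp (Continuous.measurable (by fun_prop))

lemma plan_fst {s : ℝ} {α β : Measure E} [IsProbabilityMeasure α] [IsProbabilityMeasure β]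
    {A B : E → ℝ} (hA : Continuous A) (hB : Continuous B) (h : Half s β A B) :
    (plan s α β A B).fst = α := by
  ext S hS
  have hm := measurable_gibbs (s := s) hA hB
  rw [Measure.fst_apply hS, plan, withDensity_apply _ (measurable_fst hS), ← prod_univ,
    ← Measure.prod_restrict, lintegral_prod _ hm.aemeasurable]
  have : ∀ x, ∫⁻ y, gibbs s A B (x, y) ∂β = 1 := fun x => h.lintegral x
  simp only [Measure.restrict_univ, this]
  simp

lemma plan_snd {s : ℝ} {α β : Measure E} [IsProbabilityMeasure α] [IsProbabilityMeasure β]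
    {A B : E → ℝ} (hA : Continuous A) (hB : Continuous B) (h : Half s α B A) :
    (plan s α β A B).snd = β := by
  ext S hS
  have hm := measurable_gibbs (s := s) hA hB
  rw [Measure.snd_apply hS, plan, withDensity_apply _ (measurable_snd hS), ← univ_prod,
    ← Measure.prod_restrict, lintegral_prod_symm _ hm.aemeasurable]
  have : ∀ y, ∫⁻ x, gibbs s A B (x, y) ∂α = 1 := fun y => by
    rw [← h.lintegral y]
    refine lintegral_congr fun x => ?_
    rw [gibbs, real_inner_comm, sub_right_comm]
  simp only [Measure.restrict_univ, this]
  simp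

lemma isProbabilityMeasure_of_fst {α : Measure E} [IsProbabilityMeasure α] {θ : Measure (E × E)}
    (h : θ.fst = α) : IsProbabilityMeasure θ :=
  ⟨by rw [← Measure.fst_univ, h]; exact measure_univ⟩

lemma integrable_comp_fst {α : Measure E} {θ : Measure (E × E)} (h : θ.fst = α) {u : E → ℝ}
    (hu : Integrable u α) : Integrable (fun p : E × E => u p.1) θ ∧ ∫ p, u p.1 ∂θ = ∫ x, u x ∂α := by
  subst h
  exact ⟨hu.comp_measurable measurable_fst,
    (integral_map measurable_fst.aemeasurable hu.aestronglyMeasurable).symm⟩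

lemma integrable_comp_snd {α : Measure E} {θ : Measure (E × E)} (h : θ.snd = α) {u : E → ℝ}
    (hu : Integrable u α) : Integrable (fun p : E × E => u p.2) θ ∧ ∫ p, u p.2 ∂θ = ∫ x, u x ∂α := by
  subst h
  exact ⟨hu.comp_measurable measurable_snd,
    (integral_map measurable_snd.aemeasurable hu.aestronglyMeasurable).symm⟩

/-- Jensen's inequality for `exp`, with its equality case. -/
lemma integral_nonpos_of_lintegral_exp_le {X : Type*} [MeasurableSpace X] {μ : Measure X}
    [IsProbabilityMeasure μ] {z : X → ℝ} (hz : Integrable z μ)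
    (h : ∫⁻ x, ENNReal.ofReal (exp (z x)) ∂μ ≤ 1) :
    ∫ x, z x ∂μ ≤ 0 ∧ (∫ x, z x ∂μ = 0 → z =ᵐ[μ] 0) := by
  have hm : AEStronglyMeasurable (fun x => exp (z x)) μ :=
    continuous_exp.comp_aestronglyMeasurable hz.aestronglyMeasurable
  have hi : Integrable (fun x => exp (z x)) μ := by
    refine ⟨hm, ?_⟩
    rw [hasFiniteIntegral_iff_ofReal (ae_of_all _ fun x => (exp_pos _).le)]
    exact h.trans_lt ENNReal.one_lt_top
  have h1 : ∫ x, exp (z x) ∂μ ≤ 1 := by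
    rw [integral_eq_lintegral_of_nonneg_ae (ae_of_all _ fun x => (exp_pos _).le) hm]
    exact ENNReal.toReal_le_of_le_ofReal zero_le_one (by simpa using h)
  have hi2 : Integrable (fun x => exp (z x) - 1 - z x) μ := (hi.sub (integrable_const 1)).sub hz
  have h2 : ∫ x, (exp (z x) - 1 - z x) ∂μ = ∫ x, exp (z x) ∂μ - 1 - ∫ x, z x ∂μ := by
    have e : ∫ x, (exp (z x) - 1 - z x) ∂μ = ∫ x, (exp (z x) - 1) ∂μ - ∫ x, z x ∂μ :=
      integral_sub (hi.sub (integrable_const 1)) hz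
    rw [e, integral_sub hi (integrable_const 1)]
    simp
  have h3 : ∀ x, 0 ≤ exp (z x) - 1 - z x := fun x => by linarith [add_one_le_exp (z x)]
  have h4 : 0 ≤ ∫ x, (exp (z x) - 1 - z x) ∂μ := integral_nonneg h3
  refine ⟨by linarith, fun h0 => ?_⟩
  have h5 : ∫ x, (exp (z x) - 1 - z x) ∂μ = 0 := le_antisymm (by linarith) h4
  filter_upwards [(integral_eq_zero_iff_of_nonneg (f := fun x => exp (z x) - 1 - z x) h3 hi2).1 h5] with x hx
  by_contra hne
  have := add_one_lt_exp (x := z x) hne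
  simp only [Pi.zero_apply] at hx
  linarith

/-- One Sinkhorn iteration `B → A → B'` does not increase `∫ B dβ`, and it is stationary only at
`B' = B` almost everywhere. -/
lemma update_mono {s : ℝ} {α β : Measure E} [IsProbabilityMeasure α] [IsProbabilityMeasure β]
    {A B B' : E → ℝ} (hA : Continuous A) (hB : Continuous B)
    (h : Half s β A B) (h' : Half s α B' A) (hBi : Integrable B β) (hBi' : Integrable B' β) :
    ∫ y, B' y ∂β ≤ ∫ y, B y ∂β ∧ (∫ y, B' y ∂β = ∫ y, B y ∂β → B' =ᵐ[β] B) := by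
  have hm := measurable_gibbs (s := s) hA hB
  have h1 : ∫⁻ y, ENNReal.ofReal (exp (B' y - B y)) ∂β = 1 := by
    calc ∫⁻ y, ENNReal.ofReal (exp (B' y - B y)) ∂β
        = ∫⁻ y, ∫⁻ x, gibbs s A B (x, y) ∂α ∂β := by
          refine lintegral_congr fun y => ?_
          have : ∀ x, gibbs s A B (x, y) = ENNReal.ofReal (exp (B' y - B y)) *
              ENNReal.ofReal (exp (s * ⟪y, x⟫ - B' y - A x)) := fun x => by
            rw [← ENNReal.ofReal_mul (exp_pos _).le, ← exp_add, gibbs, real_inner_comm]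
            congr 2; ring
          simp_rw [this]
          rw [lintegral_const_mul' _ _ ENNReal.ofReal_ne_top, h'.lintegral, mul_one]
      _ = ∫⁻ x, ∫⁻ y, gibbs s A B (x, y) ∂β ∂α :=
          (lintegral_lintegral_swap (f := fun x y => gibbs s A B (x, y)) (by exact hm.aemeasurable)).symm
      _ = 1 := by
          have : ∀ x, ∫⁻ y, gibbs s A B (x, y) ∂β = 1 := fun x => h.lintegral x
          simp [this]
  have h2 := integral_nonpos_of_lintegral_exp_le (hBi'.sub hBi) h1.le
  simp only [Pi.sub_apply] at h2
  rw [integral_sub hBi' hBi] at h2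
  refine ⟨by linarith [h2.1], fun h0 => ?_⟩
  filter_upwards [h2.2 (by linarith)] with y hy
  simpa [sub_eq_zero] using hy

set_option maxHeartbeats 1000000 in
/-- Existence of Schrödinger potentials, with growth constants depending on the marginals only
through their sub-Gaussian constants. The functional `A ↦ ∫ logLap s α A dβ`, restricted to a
normalized compact class stable under Sinkhorn iteration followed by renormalization, has a
minimizer. By monotonicity the iteration is stationary there `α`-almost everywhere, and one more
update turns this into equations valid everywhere. -/
theorem exists_solution {s q C : ℝ} (hs : 0 ≤ s) (hq : 0 < q) (hC : 1 ≤ C) :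
    ∃ a c : ℝ, ∀ α β : Measure E, IsProbabilityMeasure α → IsProbabilityMeasure β →
      SubG q C α → SubG q C β →
      ∃ A B : E → ℝ, Pot a c A ∧ Pot a c B ∧ Half s β A B ∧ Half s α B A := by
  set R := 1 + q * C with hR
  have hR0 : 0 ≤ R := by positivity
  have hlC : 0 ≤ log C := log_nonneg hC
  set D := (log C + q * s ^ 2 / 2) * (1 + R) with hD
  have hD0 : 0 ≤ D := by positivity
  set a := s * R + D with ha
  have ha0 : 0 ≤ a := by positivity
  set c₁ := a + log C + q * (s ^ 2 + a ^ 2) / 2 with hc₁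
  have hc₁0 : 0 ≤ c₁ := by positivity
  set c := c₁ + a * (1 + R) with hc
  have hc0 : 0 ≤ c := by positivity
  have hc₁c : c₁ ≤ c := by rw [hc]; nlinarith [mul_nonneg ha0 (by linarith : 0 ≤ 1 + R)]
  refine ⟨a, c, fun α β _ _ hα hβ => ?_⟩
  -- the normalized class and the functional
  let I : (E → ℝ) → ℝ := fun A => ∫ y, logLap s α A y ∂β
  let 𝒦 : Set (E → ℝ) := {A | Pot a c A ∧ ∫ x, A x ∂α = 0 ∧ I A ≤ D}
  have hB : ∀ A ∈ 𝒦, Pot a c (logLap s α A) := by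
    rintro A ⟨hA, hA0, -⟩
    refine ⟨convexOn_logLap hα hA.continuous hA.lower hs, fun y => ?_, fun y => ?_⟩
    · have := le_logLap hα hA.continuous hA.lower hs (hA.integrable hα) y
      rw [hA0] at this
      refine le_trans ?_ this
      rw [ha]
      nlinarith [mul_nonneg hs hR0, mul_nonneg hD0 (norm_nonneg y)]
    · refine (logLap_le hα hA.continuous hA.lower hs ha0 y).trans ?_
      gcongr
  have hzero : (fun _ => 0 : E → ℝ) ∈ 𝒦 := by
    have hP : Pot a c (fun _ : E => (0 : ℝ)) :=
      ⟨convexOn_const _ convex_univ, fun x => by simp only [Left.neg_nonpos_iff]; positivity,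
        fun x => by positivity⟩
    have hP' : ∀ x : E, -((0 : ℝ) * (1 + ‖x‖)) ≤ (fun _ : E => (0 : ℝ)) x := by simp
    refine ⟨hP, by simp, ?_⟩
    have h1 : ∀ y, logLap s α (fun _ => 0) y ≤ (log C + q * s ^ 2 / 2) * (1 + ‖y‖ ^ 2) := fun y => by
      have := logLap_le hα hP.continuous hP' hs le_rfl y
      simpa using this
    have hi : Integrable (logLap s α (fun _ => 0)) β := by
      have hconv := convexOn_logLap hα hP.continuous hP' hs
      have hlow := le_logLap hα hP.continuous hP' hs (by simp)
      refine Pot.integrable (a := s * R) (c := log C + q * s ^ 2 / 2) ⟨hconv, fun y => ?_, h1⟩ hβ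
      have := hlow y
      simp only [integral_zero, sub_zero] at this
      nlinarith [mul_nonneg hs hR0]
    refine (integral_mono hi (hβ.integrable_quad _) h1).trans ?_
    rw [integral_const_mul, integral_add (integrable_const _) hβ.sq.1]
    have := hβ.sq.2
    simp only [integral_const, probReal_univ, smul_eq_mul, one_mul, hD]
    gcongr
    rw [hR]; linarith
  have hlowI : ∀ A ∈ 𝒦, -(a * (1 + R)) ≤ I A := by
    intro A hA
    have hBA := hB A hA
    have hi := hBA.integrable hβ
    have : ∫ y, -(a * (1 + ‖y‖)) ∂β ≤ I A :=
      integral_mono (((integrable_const _).add hβ.norm.1).const_mul a).neg hi hBA.lower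
    refine le_trans ?_ this
    rw [integral_neg, integral_const_mul, integral_add (integrable_const _) hβ.norm.1]
    simp only [integral_const, probReal_univ, smul_eq_mul, one_mul]
    have := hβ.norm.2
    gcongr
  -- a minimizer
  obtain ⟨A, hA, hmin⟩ : ∃ A ∈ 𝒦, ∀ A' ∈ 𝒦, I A ≤ I A' := by
    have hne : (I '' 𝒦).Nonempty := ⟨_, _, hzero, rfl⟩
    have hbdd : BddBelow (I '' 𝒦) := ⟨-(a * (1 + R)), by rintro _ ⟨A, hA, rfl⟩; exact hlowI A hA⟩
    obtain ⟨u, -, hu, hmem⟩ := exists_seq_tendsto_sInf hne hbdd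
    choose A hA hAu using hmem
    obtain ⟨A', hA', φ, hφ, hlim⟩ := Pot.exists_subseq fun n => (hA n).1
    have hI : Tendsto (fun n => I (A (φ n))) atTop (𝓝 (I A')) :=
      integral_tendsto hβ (fun n => hB _ (hA (φ n))) fun y =>
        logLap_tendsto hα (fun n => (hA (φ n)).1) hA' hlim hs y
    have h0 : Tendsto (fun n => ∫ x, A (φ n) x ∂α) atTop (𝓝 (∫ x, A' x ∂α)) :=
      integral_tendsto hα (fun n => (hA (φ n)).1) hlim
    have hIeq : I A' = sInf (I '' 𝒦) := by
      refine tendsto_nhds_unique hI ?_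
      simp_rw [hAu]
      exact hu.comp hφ.tendsto_atTop
    refine ⟨A', ⟨hA', ?_, le_of_tendsto hI (Eventually.of_forall fun n => (hA (φ n)).2.2)⟩,
      fun A'' hA'' => hIeq ▸ csInf_le hbdd ⟨_, hA'', rfl⟩⟩
    refine tendsto_nhds_unique h0 ?_
    simp_rw [fun n => (hA (φ n)).2.1]
    exact tendsto_const_nhds
  -- one full Sinkhorn iteration starting from the minimizer
  have hBA := hB A hA
  obtain ⟨hAP, hA0, hAD⟩ := hA
  set B := logLap s α A with hBdef
  have hhB : Half s α B A := fun y => exp_logLap hα hAP.continuous hAP.lower hs y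
  set A' := logLap s β B with hA'def
  have hhA' : Half s β A' B := fun y => exp_logLap hβ hBA.continuous hBA.lower hs y
  have hA'P₁ : Pot a c₁ A' := by
    refine ⟨convexOn_logLap hβ hBA.continuous hBA.lower hs, fun y => ?_,
      logLap_le hβ hBA.continuous hBA.lower hs ha0⟩
    have := le_logLap hβ hBA.continuous hBA.lower hs (hBA.integrable hβ) y
    refine le_trans ?_ this
    have h2 : ∫ y, B y ∂β ≤ D := hAD
    rw [ha]
    nlinarith [mul_nonneg hs hR0, mul_nonneg hD0 (norm_nonneg y)]
  have hA'P : Pot a c A' := ⟨hA'P₁.convex, hA'P₁.lower, fun x => (hA'P₁.upper x).trans (by gcongr)⟩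
  set k := ∫ x, A' x ∂α with hk
  have hA'i := hA'P.integrable hα
  have hstep1 := update_mono hBA.continuous hAP.continuous hhB hhA' (hAP.integrable hα) hA'i
  rw [← hk, hA0] at hstep1
  have hk_low : -(a * (1 + R)) ≤ k := by
    have : ∫ y, -(a * (1 + ‖y‖)) ∂α ≤ k :=
      integral_mono (((integrable_const _).add hα.norm.1).const_mul a).neg hA'i hA'P.lower
    refine le_trans ?_ this
    rw [integral_neg, integral_const_mul, integral_add (integrable_const _) hα.norm.1]
    simp only [integral_const, probReal_univ, smul_eq_mul, one_mul]
    have := hα.norm.2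
    gcongr
  have hshift : ∀ y, logLap s α (fun x => A' x - k) y = logLap s α A' y + k := fun y => by
    have h1 : ∀ x, exp (s * ⟪x, y⟫ - (A' x - k)) = exp k * exp (s * ⟪x, y⟫ - A' x) := fun x => by
      rw [← exp_add]; congr 1; ring
    simp only [logLap, h1]
    rw [integral_const_mul, log_mul (exp_pos _).ne', log_exp, add_comm]
    exact (integral_exp_pos (hα.integrable_exp hA'P.continuous hA'P.lower hs y).1).ne'
  set B' := logLap s α A' with hB'def
  have hhB' : Half s α B' A' := fun y => exp_logLap hα hA'P.continuous hA'P.lower hs y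
  have hB'i : Integrable B' β := by
    refine Pot.integrable (a := s * R + |k|) (c := c₁) ⟨convexOn_logLap hα hA'P.continuous
      hA'P.lower hs, fun y => ?_, logLap_le hα hA'P.continuous hA'P.lower hs ha0⟩ hβ
    have := le_logLap hα hA'P.continuous hA'P.lower hs hA'i y
    refine le_trans ?_ this
    nlinarith only [mul_nonneg hs hR0, mul_nonneg (abs_nonneg k) (norm_nonneg y), le_abs_self k]
  have hstep2 := update_mono hA'P.continuous hBA.continuous hhA' hhB' (hBA.integrable hβ) hB'i
  have hIshift : I (fun x => A' x - k) = ∫ y, B' y ∂β + k := by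
    simp only [I, hshift]
    rw [integral_add hB'i (integrable_const _)]
    simp
  have hmem : (fun x => A' x - k) ∈ 𝒦 := by
    refine ⟨⟨?_, fun x => ?_, fun x => ?_⟩, ?_, ?_⟩
    · have := hA'P.convex.add_const (-k)
      simp only [sub_eq_add_neg]
      exact this
    · have := hA'P.lower x; linarith only [this, hstep1.1]
    · have := hA'P₁.upper x
      have h9 : 0 ≤ a * (1 + R) * ‖x‖ ^ 2 := by positivity
      have h10 : (c₁ + a * (1 + R)) * (1 + ‖x‖ ^ 2) =
        c₁ * (1 + ‖x‖ ^ 2) + a * (1 + R) + a * (1 + R) * ‖x‖ ^ 2 := by ring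
      rw [hc, h10]
      linarith only [this, h9, hk_low]
    · rw [integral_sub hA'i (integrable_const _)]; simp [hk]
    · rw [hIshift]
      have : ∫ y, B y ∂β ≤ D := hAD
      linarith [hstep1.1, hstep2.1]
  have hfin : ∫ y, B y ∂β ≤ ∫ y, B' y ∂β + k := hIshift ▸ hmin _ hmem
  have hk0 : k = 0 := le_antisymm hstep1.1 (by linarith [hstep2.1])
  have hae : A' =ᵐ[α] A := hstep1.2 hk0
  refine ⟨A', B, hA'P, hBA, hhA', fun y => ?_⟩
  rw [hhB y]
  refine integral_congr_ae ?_
  filter_upwards [hae] with x hx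
  rw [hx]

/-- Comparison of dual values: a solution of the Schrödinger system minimizes `∫ A dα + ∫ B dβ`
among pairs solving only the first half of it, and for a pair with the same value `A + B` agrees
almost everywhere. -/
lemma dual_le {s : ℝ} {α β : Measure E} [IsProbabilityMeasure α] [IsProbabilityMeasure β]
    {A B A' B' : E → ℝ} (hA : Continuous A) (hB : Continuous B) (hA' : Continuous A')
    (hB' : Continuous B') (h₁ : Half s β A B) (h₂ : Half s α B A) (h₁' : Half s β A' B')
    (hAi : Integrable A α) (hBi : Integrable B β) (hAi' : Integrable A' α)
    (hBi' : Integrable B' β) :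
    ∫ x, A x ∂α + ∫ y, B y ∂β ≤ ∫ x, A' x ∂α + ∫ y, B' y ∂β ∧
      (∫ x, A x ∂α + ∫ y, B y ∂β = ∫ x, A' x ∂α + ∫ y, B' y ∂β →
        ∀ᵐ p ∂(α.prod β), A p.1 + B p.2 = A' p.1 + B' p.2) := by
  set θ := plan s α β A B with hθ
  have hf : θ.fst = α := plan_fst hA hB h₁
  have hsn : θ.snd = β := plan_snd hA hB h₂
  have := isProbabilityMeasure_of_fst hf
  obtain ⟨iA, eA⟩ := integrable_comp_fst hf hAi
  obtain ⟨iA', eA'⟩ := integrable_comp_fst hf hAi'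
  obtain ⟨iB, eB⟩ := integrable_comp_snd hsn hBi
  obtain ⟨iB', eB'⟩ := integrable_comp_snd hsn hBi'
  have hm := measurable_gibbs (s := s) hA hB
  have hm' := measurable_gibbs (s := s) hA' hB'
  set z : E × E → ℝ := fun p => (A p.1 + B p.2) - (A' p.1 + B' p.2) with hz
  have hzi : Integrable z θ := (iA.add iB).sub (iA'.add iB')
  have hzint : ∫ p, z p ∂θ = (∫ x, A x ∂α + ∫ y, B y ∂β) - (∫ x, A' x ∂α + ∫ y, B' y ∂β) := by
    rw [← eA, ← eA', ← eB, ← eB', ← integral_add iA iB, ← integral_add iA' iB', ← integral_sub]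
    exacts [iA.add iB, iA'.add iB']
  have hez : ∫⁻ p, ENNReal.ofReal (exp (z p)) ∂θ ≤ 1 := by
    have hc : Continuous z := by fun_prop
    rw [hθ, plan, lintegral_withDensity_eq_lintegral_mul _ hm
      (g := fun p => ENNReal.ofReal (exp (z p)))
      (ENNReal.measurable_ofReal.comp (continuous_exp.comp hc).measurable)]
    have : ∀ p, (gibbs s A B * fun p => ENNReal.ofReal (exp (z p))) p = gibbs s A' B' p := fun p => by
      simp only [Pi.mul_apply, gibbs, hz]
      rw [← ENNReal.ofReal_mul (exp_pos _).le, ← exp_add]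
      congr 2; ring
    rw [lintegral_congr this, lintegral_prod _ hm'.aemeasurable]
    have h2 : ∀ x, ∫⁻ y, gibbs s A' B' (x, y) ∂β = 1 := fun x => h₁'.lintegral x
    simp [h2]
  have h3 := integral_nonpos_of_lintegral_exp_le hzi hez
  rw [hzint] at h3
  refine ⟨by linarith [h3.1], fun h0 => ?_⟩
  have hac : α.prod β ≪ θ := withDensity_absolutelyContinuous' hm.aemeasurable
    (ae_of_all _ fun p => (ENNReal.ofReal_pos.2 (exp_pos _)).ne')
  filter_upwards [hac.ae_le (h3.2 (by linarith))] with p hp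
  simp only [hz, Pi.zero_apply] at hp
  linarith

/-- Schrödinger potentials are unique up to the additive constants `(k, -k)`. -/
lemma solution_unique {s : ℝ} {α β : Measure E} [IsProbabilityMeasure α] [IsProbabilityMeasure β]
    {A B A' B' : E → ℝ} (hA : Continuous A) (hB : Continuous B) (hA' : Continuous A')
    (hB' : Continuous B') (h₁ : Half s β A B) (h₂ : Half s α B A) (h₁' : Half s β A' B')
    (h₂' : Half s α B' A')
    (hAi : Integrable A α) (hBi : Integrable B β) (hAi' : Integrable A' α)
    (hBi' : Integrable B' β) :
    ∃ k : ℝ, (∀ x, A' x = A x - k) ∧ ∀ y, B' y = B y + k := by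
  have hle := dual_le hA hB hA' hB' h₁ h₂ h₁' hAi hBi hAi' hBi'
  have hge := dual_le hA' hB' hA hB h₁' h₂' h₁ hAi' hBi' hAi hBi
  have hae := hle.2 (le_antisymm hle.1 hge.1)
  have hae2 : ∀ᵐ y ∂β, ∀ᵐ x ∂α, A x + B y = A' x + B' y :=
    Measure.ae_ae_of_ae_prod
      ((Measure.measurePreserving_swap (μ := β) (ν := α)).quasiMeasurePreserving.ae hae)
  obtain ⟨y₀, hy₀⟩ := hae2.exists
  set k := B' y₀ - B y₀
  have hB'k : ∀ y, B' y = B y + k := fun y => by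
    apply exp_injective
    rw [h₂' y, exp_add, h₂ y, mul_comm, ← integral_const_mul]
    refine integral_congr_ae ?_
    filter_upwards [hy₀] with x hx
    rw [← exp_add]; congr 1
    simp only [k]; linarith
  refine ⟨k, fun x => ?_, hB'k⟩
  apply exp_injective
  rw [h₁' x, sub_eq_neg_add, exp_add, h₁ x, ← integral_const_mul]
  refine integral_congr_ae (ae_of_all _ fun y => ?_)
  simp only
  rw [← exp_add, hB'k]; congr 1; ring

/-- When both marginals equal `α`, exchanging `A` and `B` gives another solution, so they differ by a
constant, which can be shared out to obtain a self-potential, i.e. a solution with `A = B`. -/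
lemma exists_self_solution {s q C : ℝ} {α : Measure E} [IsProbabilityMeasure α] {a c : ℝ}
    (hα : SubG q C α) {A B : E → ℝ} (hA : Pot a c A) (hB : Pot a c B) (h₁ : Half s α A B)
    (h₂ : Half s α B A) :
    ∃ k : ℝ, Half s α (fun x => B x + k) (fun x => B x + k) := by
  obtain ⟨k, -, hk⟩ := solution_unique hA.continuous hB.continuous hB.continuous hA.continuous
    h₁ h₂ h₂ h₁ (hA.integrable hα) (hB.integrable hα) (hB.integrable hα) (hA.integrable hα)
  refine ⟨k / 2, fun x => ?_⟩
  rw [exp_add, h₂ x, mul_comm, ← integral_const_mul]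
  refine integral_congr_ae (ae_of_all _ fun y => ?_)
  simp only
  rw [← exp_add, hk y]; congr 1; ring

/-- The mixture `(1 - t) μ + t ν`. -/
noncomputable def mix (t : ℝ) (μ ν : Measure E) : Measure E :=
  ENNReal.ofReal (1 - t) • μ + ENNReal.ofReal t • ν

section mix

variable {t : ℝ} {μ ν : Measure E}

lemma mix_prob [IsProbabilityMeasure μ] [IsProbabilityMeasure ν] (h0 : 0 ≤ t) (h1 : t ≤ 1) :
    IsProbabilityMeasure (mix t μ ν) := by
  refine ⟨?_⟩
  simp only [mix, Measure.coe_add, Measure.coe_smul, Pi.add_apply, Pi.smul_apply, measure_univ,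
    smul_eq_mul, mul_one]
  rw [← ENNReal.ofReal_add (by linarith) h0]; simp

lemma mix_integrable {u : E → ℝ} (hμ : Integrable u μ) (hν : Integrable u ν) :
    Integrable u (mix t μ ν) :=
  (hμ.smul_measure ENNReal.ofReal_ne_top).add_measure (hν.smul_measure ENNReal.ofReal_ne_top)

lemma mix_integral (h0 : 0 ≤ t) (h1 : t ≤ 1) {u : E → ℝ} (hμ : Integrable u μ)
    (hν : Integrable u ν) :
    ∫ x, u x ∂(mix t μ ν) = (1 - t) * ∫ x, u x ∂μ + t * ∫ x, u x ∂ν := by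
  rw [mix, integral_add_measure (hμ.smul_measure ENNReal.ofReal_ne_top)
    (hν.smul_measure ENNReal.ofReal_ne_top), integral_smul_measure, integral_smul_measure,
    ENNReal.toReal_ofReal (by linarith), ENNReal.toReal_ofReal h0]
  rfl

lemma mix_subG {q C : ℝ} (h0 : 0 ≤ t) (h1 : t ≤ 1) (hμ : SubG q C μ) (hν : SubG q C ν) :
    SubG q C (mix t μ ν) := by
  refine ⟨hμ.pos, hμ.one_le, mix_integrable hμ.int hν.int, ?_⟩
  rw [mix_integral h0 h1 hμ.int hν.int]
  have := hμ.le
  have := hν.le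
  nlinarith

lemma mix_self (h0 : 0 ≤ t) (h1 : t ≤ 1) : mix t μ μ = μ := by
  rw [mix, ← add_smul, ← ENNReal.ofReal_add (by linarith) h0]; simp

end mix

/-- Passing to the limit in the Schrödinger system along mixtures `(1 - tₙ) β₀ + tₙ β₁ → β₀`. -/
lemma half_limit {s q C a c : ℝ} (hs : 0 ≤ s) {β₀ β₁ : Measure E} [IsProbabilityMeasure β₀]
    [IsProbabilityMeasure β₁] (h₀ : SubG q C β₀) (h₁ : SubG q C β₁) {t : ℕ → ℝ}
    (ht0 : ∀ n, 0 ≤ t n) (ht1 : ∀ n, t n ≤ 1) (ht : Tendsto t atTop (𝓝 0))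
    {A B : ℕ → E → ℝ} (hB : ∀ n, Pot a c (B n)) (hH : ∀ n, Half s (mix (t n) β₀ β₁) (A n) (B n))
    {A' B' : E → ℝ} (hAl : ∀ x, Tendsto (fun n => A n x) atTop (𝓝 (A' x)))
    (hBl : ∀ x, Tendsto (fun n => B n x) atTop (𝓝 (B' x))) : Half s β₀ A' B' := by
  intro x
  have h1 := (continuous_exp.tendsto _).comp (hAl x)
  refine tendsto_nhds_unique h1 ?_
  have h2 : ∀ n, (exp ∘ fun n => A n x) n = (1 - t n) * ∫ y, exp (s * ⟪y, x⟫ - B n y) ∂β₀ +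
      t n * ∫ y, exp (s * ⟪y, x⟫ - B n y) ∂β₁ := fun n => by
    rw [Function.comp, hH n x, mix_integral (ht0 n) (ht1 n)]
    · exact (h₀.integrable_exp (hB n).continuous (hB n).lower hs x).1
    · exact (h₁.integrable_exp (hB n).continuous (hB n).lower hs x).1
  rw [tendsto_congr h2]
  have h3 := integral_exp_tendsto h₀ hB hBl hs x
  have h4 := integral_exp_tendsto h₁ hB hBl hs x
  simpa using ((ht.const_sub 1).mul h3).add (ht.mul h4)

/-- Stability of the second potential, modulo constants, as the marginals tend to `(α₀, β₀)`
along segments: every subsequence has, by compactness, a further subsequence converging to a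
solution for `(α₀, β₀)`, which is unique up to constants. -/
theorem solution_stable {s q C a c : ℝ} (hs : 0 ≤ s) {α₀ α₁ β₀ β₁ : Measure E}
    [IsProbabilityMeasure α₀] [IsProbabilityMeasure α₁] [IsProbabilityMeasure β₀]
    [IsProbabilityMeasure β₁] (hα₀ : SubG q C α₀) (hα₁ : SubG q C α₁) (hβ₀ : SubG q C β₀)
    (hβ₁ : SubG q C β₁) {t : ℕ → ℝ} (ht0 : ∀ n, 0 ≤ t n) (ht1 : ∀ n, t n ≤ 1)
    (ht : Tendsto t atTop (𝓝 0)) {A B : ℕ → E → ℝ} (hA : ∀ n, Pot a c (A n))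
    (hB : ∀ n, Pot a c (B n)) (hAB : ∀ n, Half s (mix (t n) β₀ β₁) (A n) (B n))
    (hBA : ∀ n, Half s (mix (t n) α₀ α₁) (B n) (A n)) {A' B' : E → ℝ} (hA' : Pot a c A')
    (hB' : Pot a c B') (hAB' : Half s β₀ A' B') (hBA' : Half s α₀ B' A')
    {ν ν' : Measure E} [IsProbabilityMeasure ν] [IsProbabilityMeasure ν']
    (hν : SubG q C ν) (hν' : SubG q C ν') :
    Tendsto (fun n => ∫ x, B n x ∂ν - ∫ x, B n x ∂ν') atTop
      (𝓝 (∫ x, B' x ∂ν - ∫ x, B' x ∂ν')) := by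
  refine tendsto_of_subseq_tendsto fun ns hns => ?_
  obtain ⟨A₁, hA₁, φ, hφ, hAl⟩ := Pot.exists_subseq fun n => hA (ns n)
  obtain ⟨B₁, hB₁, ψ, hψ, hBl⟩ := Pot.exists_subseq fun n => hB (ns (φ n))
  refine ⟨φ ∘ ψ, ?_⟩
  have hAl' : ∀ x, Tendsto (fun n => A (ns (φ (ψ n))) x) atTop (𝓝 (A₁ x)) := fun x =>
    (hAl x).comp hψ.tendsto_atTop
  have htl : Tendsto (fun n => t (ns (φ (ψ n)))) atTop (𝓝 0) :=
    ht.comp (hns.comp (hφ.tendsto_atTop.comp hψ.tendsto_atTop))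
  have e1 : Half s β₀ A₁ B₁ := half_limit hs hβ₀ hβ₁ (fun n => ht0 _) (fun n => ht1 _) htl
    (fun n => hB _) (fun n => hAB _) hAl' hBl
  have e2 : Half s α₀ B₁ A₁ := half_limit hs hα₀ hα₁ (fun n => ht0 _) (fun n => ht1 _) htl
    (fun n => hA _) (fun n => hBA _) hBl hAl'
  obtain ⟨k, -, hk⟩ := solution_unique hA₁.continuous hB₁.continuous hA'.continuous hB'.continuous
    e1 e2 hAB' hBA' (hA₁.integrable hα₀) (hB₁.integrable hβ₀) (hA'.integrable hα₀)
    (hB'.integrable hβ₀)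
  have h3 : ∫ x, B' x ∂ν - ∫ x, B' x ∂ν' = ∫ x, B₁ x ∂ν - ∫ x, B₁ x ∂ν' := by
    simp_rw [hk]
    rw [integral_add (hB₁.integrable hν) (integrable_const _),
      integral_add (hB₁.integrable hν') (integrable_const _)]
    simp
  rw [h3]
  exact (integral_tendsto hν (fun n => hB _) hBl).sub (integral_tendsto hν' (fun n => hB _) hBl)

end Schrodinger

/-! ### Positive definiteness of the Gaussian kernel and weak duality -/

section SelfPotential

variable {E : Type*} [NormedAddCommGroup E] [InnerProductSpace ℝ E] [FiniteDimensional ℝ E]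
  [MeasurableSpace E] [BorelSpace E]

/-- Gaussian smoothing at `z` of the measure with density `exp (s ‖·‖² / 2 - H)` relative to
`α`. -/
noncomputable def smooth (s : ℝ) (α : Measure E) (H : E → ℝ) (z : E) : ℝ≥0∞ :=
  ∫⁻ x, ENNReal.ofReal (exp (s / 2 * ‖x‖ ^ 2 - s * ‖x - z‖ ^ 2 - H x)) ∂α

/-- The parallelogram identity behind the factorization of a Gaussian kernel as a square. -/
lemma gauss_factor (s : ℝ) (H H' : E → ℝ) (x y z : E) :
    ENNReal.ofReal (exp (s / 2 * ‖x‖ ^ 2 - s * ‖x - z‖ ^ 2 - H x)) *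
      ENNReal.ofReal (exp (s / 2 * ‖y‖ ^ 2 - s * ‖y - z‖ ^ 2 - H' y)) =
    gibbs s H H' (x, y) *
      ENNReal.ofReal (exp (-(2 * s) * ‖z - (1 / 2 : ℝ) • (x + y)‖ ^ 2)) := by
  rw [gibbs, ← ENNReal.ofReal_mul (exp_pos _).le, ← ENNReal.ofReal_mul (exp_pos _).le, ← exp_add,
    ← exp_add]
  congr 2
  rw [norm_sub_sq_real x z, norm_sub_sq_real y z, norm_sub_sq_real z, norm_smul, mul_pow,
    norm_add_sq_real, inner_smul_right, inner_add_right, real_inner_comm z x, real_inner_comm z y]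
  norm_num
  ring

lemma smooth_mul {s : ℝ} {α β : Measure E} [IsProbabilityMeasure α]
    [IsProbabilityMeasure β] {H H' : E → ℝ} (hH : Continuous H) (hH' : Continuous H') :
    ∫⁻ z, smooth s α H z * smooth s β H' z =
      (∫⁻ p, gibbs s H H' p ∂(α.prod β)) *
        ∫⁻ z : E, ENNReal.ofReal (exp (-(2 * s) * ‖z‖ ^ 2)) := by
  have h1 : ∀ z, smooth s α H z * smooth s β H' z =
      ∫⁻ p : E × E, gibbs s H H' p *
        ENNReal.ofReal (exp (-(2 * s) * ‖z - (1 / 2 : ℝ) • (p.1 + p.2)‖ ^ 2)) ∂(α.prod β) := by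
    intro z
    rw [smooth, smooth, ← lintegral_prod_mul]
    · exact lintegral_congr fun p => gauss_factor s H H' p.1 p.2 z
    · exact (ENNReal.measurable_ofReal.comp (Continuous.measurable (by fun_prop))).aemeasurable
    · exact (ENNReal.measurable_ofReal.comp (Continuous.measurable (by fun_prop))).aemeasurable
  simp_rw [h1]
  rw [lintegral_lintegral_swap]
  · have h2 : ∀ p : E × E, ∫⁻ z : E, gibbs s H H' p *
        ENNReal.ofReal (exp (-(2 * s) * ‖z - (1 / 2 : ℝ) • (p.1 + p.2)‖ ^ 2)) =
        gibbs s H H' p * ∫⁻ z : E, ENNReal.ofReal (exp (-(2 * s) * ‖z‖ ^ 2)) := fun p => by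
      rw [lintegral_const_mul' (gibbs s H H' p) _ ENNReal.ofReal_ne_top,
        lintegral_sub_right_eq_self (fun z : E => ENNReal.ofReal (exp (-(2 * s) * ‖z‖ ^ 2)))]
    simp_rw [h2]
    rw [lintegral_mul_const _ (measurable_gibbs hH hH')]
  · refine Measurable.aemeasurable ?_
    refine ((measurable_gibbs hH hH').comp measurable_snd).mul
      (ENNReal.measurable_ofReal.comp (Continuous.measurable ?_))
    fun_prop

lemma two_mul_le_sq (a b : ℝ≥0∞) : 2 * (a * b) ≤ a * a + b * b := by
  rcases eq_or_ne a ⊤ with rfl | ha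
  · simp
  rcases eq_or_ne b ⊤ with rfl | hb
  · simp
  lift a to NNReal using ha
  lift b to NNReal using hb
  have := two_mul_le_add_sq a b
  norm_cast
  calc 2 * (a * b) = 2 * a * b := by ring
    _ ≤ a ^ 2 + b ^ 2 := this
    _ = _ := by ring

/-- Positive semi-definiteness of the Gaussian kernel, for the Gibbs kernels of `H`, `H'`. -/
lemma gibbs_psd {s : ℝ} (hs : 0 < s) {α β : Measure E} [IsProbabilityMeasure α]
    [IsProbabilityMeasure β] {H H' : E → ℝ} (hH : Continuous H) (hH' : Continuous H') :
    2 * ∫⁻ p, gibbs s H H' p ∂(α.prod β) ≤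
      ∫⁻ p, gibbs s H H p ∂(α.prod α) + ∫⁻ p, gibbs s H' H' p ∂(β.prod β) := by
  set c₀ := ∫⁻ z : E, ENNReal.ofReal (exp (-(2 * s) * ‖z‖ ^ 2)) with hc₀
  have hipos : 0 < ∫ z : E, exp (-(2 * s) * ‖z‖ ^ 2) := by
    rw [GaussianFourier.integral_rexp_neg_mul_sq_norm (by positivity)]; positivity
  have hi : Integrable (fun z : E => exp (-(2 * s) * ‖z‖ ^ 2)) := by
    by_contra hn; rw [integral_undef hn] at hipos; exact lt_irrefl _ hipos
  have hc : c₀ = ENNReal.ofReal (∫ z : E, exp (-(2 * s) * ‖z‖ ^ 2)) :=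
    (ofReal_integral_eq_lintegral_ofReal hi (ae_of_all _ fun z => (exp_pos _).le)).symm
  have hc0 : c₀ ≠ 0 := by rw [hc]; exact (ENNReal.ofReal_pos.2 hipos).ne'
  have hct : c₀ ≠ ⊤ := by rw [hc]; exact ENNReal.ofReal_ne_top
  have hsm : ∀ (μ : Measure E) [IsProbabilityMeasure μ] {G : E → ℝ}, Continuous G →
      Measurable (smooth s μ G) := fun μ _ G hG =>
    Measurable.lintegral_prod_right' (ν := μ)
      (f := fun p : E × E => ENNReal.ofReal (exp (s / 2 * ‖p.2‖ ^ 2 - s * ‖p.2 - p.1‖ ^ 2 - G p.2)))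
      (ENNReal.measurable_ofReal.comp (Continuous.measurable (by fun_prop)))
  refine (ENNReal.mul_le_mul_iff_left hc0 hct).1 ?_
  rw [mul_assoc, add_mul, ← smooth_mul hH hH', ← smooth_mul hH hH, ← smooth_mul hH' hH',
    ← lintegral_const_mul' _ _ (by simp),
    ← lintegral_add_left (f := fun z => smooth s α H z * smooth s α H z)
      ((hsm α hH).mul (hsm α hH))]
  exact lintegral_mono fun z => two_mul_le_sq _ _

lemma lintegral_gibbs {s : ℝ} {α β : Measure E} [IsProbabilityMeasure α] [IsProbabilityMeasure β]
    {A B : E → ℝ} (hA : Continuous A) (hB : Continuous B) (h : Half s β A B) :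
    ∫⁻ p, gibbs s A B p ∂(α.prod β) = 1 := by
  have h1 := plan_fst (α := α) hA hB h
  have := isProbabilityMeasure_of_fst h1
  rw [← setLIntegral_univ, ← withDensity_apply _ MeasurableSet.univ]
  exact measure_univ (μ := plan s α β A B)

lemma lintegral_gibbs' {s : ℝ} {α β : Measure E} [IsProbabilityMeasure α] [IsProbabilityMeasure β]
    {A B : E → ℝ} (hA : Continuous A) (hB : Continuous B) (h : Half s α B A) :
    ∫⁻ p, gibbs s A B p ∂(α.prod β) = 1 := by
  have h1 := plan_snd (β := β) hA hB h
  rw [← setLIntegral_univ, ← withDensity_apply _ MeasurableSet.univ]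
  change plan s α β A B univ = 1
  rw [← Measure.snd_univ, h1]; exact measure_univ

/-- Subgradient inequality for the autocorrelation term: among self-potentials `H` of probability
measures `α`, the self-potential of `β` has the largest integral against `β`. -/
lemma self_le {s : ℝ} (hs : 0 < s) {α β : Measure E} [IsProbabilityMeasure α]
    [IsProbabilityMeasure β] {H H' : E → ℝ} (hH : Continuous H) (hH' : Continuous H')
    (h : Half s α H H) (h' : Half s β H' H') (hi : Integrable H β) (hi' : Integrable H' β) :
    ∫ y, H y ∂β ≤ ∫ y, H' y ∂β := by
  have h1 := gibbs_psd hs (α := α) (β := β) hH hH'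
  rw [lintegral_gibbs hH hH h, lintegral_gibbs hH' hH' h', one_add_one_eq_two] at h1
  have h2 : ∫⁻ p, gibbs s H H' p ∂(α.prod β) ≤ 1 :=
    (ENNReal.mul_le_mul_iff_right (a := 2) (by simp) (by simp)).1 (by simpa using h1)
  have h3 : ∫⁻ y, ENNReal.ofReal (exp (H y - H' y)) ∂β ≤ 1 := by
    refine le_trans (le_of_eq ?_) h2
    rw [lintegral_prod_symm _ (measurable_gibbs hH hH').aemeasurable]
    refine lintegral_congr fun y => ?_
    have : ∀ x, gibbs s H H' (x, y) = ENNReal.ofReal (exp (H y - H' y)) *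
        ENNReal.ofReal (exp (s * ⟪y, x⟫ - H y - H x)) := fun x => by
      rw [← ENNReal.ofReal_mul (exp_pos _).le, ← exp_add, gibbs, real_inner_comm]
      congr 2; ring
    simp_rw [this]
    rw [lintegral_const_mul' _ _ ENNReal.ofReal_ne_top, h.lintegral, mul_one]
  have h4 := (integral_nonpos_of_lintegral_exp_le (hi.sub hi') h3).1
  simp only [Pi.sub_apply] at h4
  rw [integral_sub hi hi'] at h4
  linarith

end SelfPotential

section Duality

variable {E : Type*} [NormedAddCommGroup E] [InnerProductSpace ℝ E] [FiniteDimensional ℝ E]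
  [MeasurableSpace E] [BorelSpace E]

/-- Donsker–Varadhan inequality: `∫ u dθ ≤ KL(θ ‖ ρ)` whenever `∫ exp u dρ ≤ 1`. -/
lemma weak_dual {X : Type*} [MeasurableSpace X] {ρ θ : Measure X} [IsProbabilityMeasure ρ]
    [IsProbabilityMeasure θ] (hac : θ ≪ ρ)
    (hl : Integrable (fun x => log (θ.rnDeriv ρ x).toReal) θ) {u : X → ℝ} (hm : Measurable u)
    (hu : Integrable u θ) (h1 : ∫⁻ x, ENNReal.ofReal (exp (u x)) ∂ρ ≤ 1) :
    ∫ x, u x ∂θ ≤ ∫ x, log (θ.rnDeriv ρ x).toReal ∂θ := by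
  set ℓ : X → ℝ := fun x => log (θ.rnDeriv ρ x).toReal with hℓ
  have hml : Measurable ℓ := (Measure.measurable_rnDeriv θ ρ).ennreal_toReal.log
  have h2 : ∫⁻ x, ENNReal.ofReal (exp (u x - ℓ x)) ∂θ ≤ 1 := by
    have hme : Measurable fun x => ENNReal.ofReal (exp (u x - ℓ x)) :=
      ENNReal.measurable_ofReal.comp (hm.sub hml).exp
    rw [← lintegral_rnDeriv_mul hac hme.aemeasurable]
    refine le_trans (lintegral_mono_ae ?_) h1
    filter_upwards [θ.rnDeriv_lt_top ρ] with x hx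
    rcases eq_or_ne (θ.rnDeriv ρ x) 0 with h0 | h0
    · simp [h0]
    · have hp : 0 < (θ.rnDeriv ρ x).toReal := ENNReal.toReal_pos h0 hx.ne
      nth_rw 1 [← ENNReal.ofReal_toReal hx.ne]
      rw [← ENNReal.ofReal_mul hp.le, hℓ, sub_eq_add_neg, exp_add, exp_neg, exp_log hp]
      exact le_of_eq (by congr 1; field_simp)
  have h3 := (integral_nonpos_of_lintegral_exp_le (hu.sub hl) h2).1
  simp only [Pi.sub_apply] at h3
  rw [integral_sub hu hl] at h3
  linarith

end Duality

/-! ### Entropic transport costs and Sinkhorn potentials -/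

section Cost

variable {d : ℕ} {ε : ℝ}

local notation "V" => EuclideanSpace ℝ (Fin d)

lemma cost_eq (hε : 0 < ε) (a b : ℝ) (x y : V) :
    2 / ε * ⟪x, y⟫ - a - b =
      ((‖x‖ ^ 2 - ε * a) + (‖y‖ ^ 2 - ε * b) - ‖x - y‖ ^ 2) / ε := by
  rw [norm_sub_sq_real]; field_simp; ring

/-- Weak duality: a pair of potentials with Gibbs mass at most one bounds the entropic cost from
below. -/
lemma le_OTe (hε : 0 < ε) {α β : Measure V} [IsProbabilityMeasure α] [IsProbabilityMeasure β]
    {A B : V → ℝ} (hA : Continuous A) (hB : Continuous B)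
    (hAi : Integrable (fun x => ‖x‖ ^ 2 - ε * A x) α)
    (hBi : Integrable (fun x => ‖x‖ ^ 2 - ε * B x) β)
    (h : ∫⁻ p, gibbs (2 / ε) A B p ∂(α.prod β) ≤ 1) :
    ((∫ x, (‖x‖ ^ 2 - ε * A x) ∂α + ∫ y, (‖y‖ ^ 2 - ε * B y) ∂β : ℝ) : EReal) ≤ OTe d ε α β := by
  refine le_iInf fun θ => le_iInf fun hθ => le_iInf fun h1 => le_iInf fun h2 => ?_
  rw [KLdiv]
  split_ifs with hac
  · obtain ⟨hac, hl⟩ := hac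
    obtain ⟨iA, eA⟩ := integrable_comp_fst h1 hAi
    obtain ⟨iB, eB⟩ := integrable_comp_snd h2 hBi
    rw [← eA, ← eB]
    by_cases hc : Integrable (fun p : V × V => ‖p.1 - p.2‖ ^ 2) θ
    · rw [← ofReal_integral_eq_lintegral_ofReal hc (ae_of_all _ fun p => by positivity),
        EReal.coe_ennreal_ofReal, max_eq_left (integral_nonneg fun p => by positivity)]
      norm_cast
      have hi := ((iA.add iB).sub hc).div_const ε
      have hm : Measurable fun p : V × V => ((‖p.1‖ ^ 2 - ε * A p.1) + (‖p.2‖ ^ 2 - ε * B p.2)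
        - ‖p.1 - p.2‖ ^ 2) / ε := Continuous.measurable (by fun_prop)
      have hw := weak_dual hac hl hm hi (by
        simp_rw [← cost_eq hε]; exact h)
      rw [integral_div] at hw
      have e1 : ∫ p : V × V, ((‖p.1‖ ^ 2 - ε * A p.1) + (‖p.2‖ ^ 2 - ε * B p.2)
          - ‖p.1 - p.2‖ ^ 2) ∂θ = ∫ p : V × V, (‖p.1‖ ^ 2 - ε * A p.1) ∂θ +
          ∫ p : V × V, (‖p.2‖ ^ 2 - ε * B p.2) ∂θ - ∫ p : V × V, ‖p.1 - p.2‖ ^ 2 ∂θ := by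
        rw [← integral_add iA iB]
        exact integral_sub (iA.add iB) hc
      rw [e1, div_le_iff₀ hε] at hw
      linarith
    · have : ∫⁻ p : V × V, ENNReal.ofReal (‖p.1 - p.2‖ ^ 2) ∂θ = ⊤ := by
        by_contra hn
        refine hc ⟨by fun_prop, ?_⟩
        rw [hasFiniteIntegral_iff_ofReal (ae_of_all _ fun p => by positivity)]
        exact lt_top_iff_ne_top.2 hn
      rw [this, EReal.coe_ennreal_top, ← EReal.coe_mul, EReal.top_add_coe]
      exact le_top
  · rw [EReal.coe_mul_top_of_pos hε, EReal.add_top_of_ne_bot]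
    · exact le_top
    · simp

/-- Strong duality: the entropic plan of a pair of Schrödinger potentials is optimal. -/
lemma OTe_eq (hε : 0 < ε) {α β : Measure V} [IsProbabilityMeasure α] [IsProbabilityMeasure β]
    {A B : V → ℝ} (hA : Continuous A) (hB : Continuous B)
    (hα : Integrable (fun x => ‖x‖ ^ 2) α) (hβ : Integrable (fun x => ‖x‖ ^ 2) β)
    (hAi : Integrable A α) (hBi : Integrable B β)
    (h₁ : Half (2 / ε) β A B) (h₂ : Half (2 / ε) α B A) :
    OTe d ε α β =
      ((∫ x, (‖x‖ ^ 2 - ε * A x) ∂α + ∫ y, (‖y‖ ^ 2 - ε * B y) ∂β : ℝ) : EReal) := by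
  have hfi := hα.sub (hAi.const_mul ε)
  have hgi := hβ.sub (hBi.const_mul ε)
  refine le_antisymm ?_ (le_OTe hε hA hB hfi hgi (lintegral_gibbs hA hB h₁).le)
  set θ := plan (2 / ε) α β A B with hθ
  have hf : θ.fst = α := plan_fst hA hB h₁
  have hsn : θ.snd = β := plan_snd hA hB h₂
  have hP := isProbabilityMeasure_of_fst hf
  refine iInf_le_of_le θ (iInf_le_of_le hP (iInf_le_of_le hf (iInf_le_of_le hsn ?_)))
  obtain ⟨iA, -⟩ := integrable_comp_fst hf hAi
  obtain ⟨iB, -⟩ := integrable_comp_snd hsn hBi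
  obtain ⟨iα, -⟩ := integrable_comp_fst hf hα
  obtain ⟨iβ, -⟩ := integrable_comp_snd hsn hβ
  obtain ⟨if', ef⟩ := integrable_comp_fst hf hfi
  obtain ⟨ig, eg⟩ := integrable_comp_snd hsn hgi
  have hm := measurable_gibbs (s := 2 / ε) hA hB
  have hac : θ ≪ α.prod β := withDensity_absolutelyContinuous _ _
  have hlog : (fun p => log (θ.rnDeriv (α.prod β) p).toReal) =ᵐ[θ]
      fun p => 2 / ε * ⟪p.1, p.2⟫ - A p.1 - B p.2 := by
    filter_upwards [hac.ae_le (Measure.rnDeriv_withDensity (α.prod β) hm)] with p hp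
    rw [hθ, plan, hp, gibbs, ENNReal.toReal_ofReal (exp_pos _).le, log_exp]
  have ii : Integrable (fun p : V × V => (⟪p.1, p.2⟫ : ℝ)) θ := by
    refine (iα.add iβ).mono' (Continuous.aestronglyMeasurable (by fun_prop))
      (ae_of_all _ fun p => ?_)
    have := abs_real_inner_le_norm p.1 p.2
    simp only [Pi.add_apply, norm_eq_abs]
    nlinarith [sq_nonneg (‖p.1‖ - ‖p.2‖), norm_nonneg p.1, norm_nonneg p.2]
  have il : Integrable (fun p : V × V => 2 / ε * ⟪p.1, p.2⟫ - A p.1 - B p.2) θ :=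
    ((ii.const_mul _).sub iA).sub iB
  have hc : Integrable (fun p : V × V => ‖p.1 - p.2‖ ^ 2) θ := by
    have : (fun p : V × V => ‖p.1 - p.2‖ ^ 2) =
        fun p : V × V => ‖p.1‖ ^ 2 - 2 * ⟪p.1, p.2⟫ + ‖p.2‖ ^ 2 := by
      ext p; exact norm_sub_sq_real _ _
    rw [this]
    exact (iα.sub (ii.const_mul 2)).add iβ
  rw [KLdiv, if_pos ⟨hac, il.congr hlog.symm⟩, integral_congr_ae hlog,
    ← ofReal_integral_eq_lintegral_ofReal hc (ae_of_all _ fun p => by positivity),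
    EReal.coe_ennreal_ofReal, max_eq_left (integral_nonneg fun p => by positivity)]
  norm_cast
  rw [← integral_const_mul, ← integral_add hc (il.const_mul ε)]
  simp only [Pi.sub_apply] at ef eg if' ig
  rw [← ef, ← eg, ← integral_add if' ig]
  refine le_of_eq (integral_congr_ae (ae_of_all _ fun p => ?_))
  simp only
  rw [cost_eq hε]
  field_simp
  ring

lemma SubG.mono {q C q' C' : ℝ} {μ : Measure V} (h : SubG q C μ) (hq : q ≤ q') (hC : C ≤ C') :
    SubG q' C' μ := by
  have hb : ∀ x : V, exp (‖x‖ ^ 2 / q') ≤ exp (‖x‖ ^ 2 / q) := fun x => by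
    have := h.pos
    gcongr
  have hi : Integrable (fun x => exp (‖x‖ ^ 2 / q')) μ := by
    refine h.int.mono' (by fun_prop) (ae_of_all _ fun x => ?_)
    rw [norm_of_nonneg (exp_pos _).le]; exact hb x
  exact ⟨h.pos.trans_le hq, h.one_le.trans hC, hi, (integral_mono hi h.int hb).trans (h.le.trans hC)⟩

lemma exists_subG {μ : Measure V} (h : SubGaussian d μ) : ∃ q C, SubG q C μ := by
  obtain ⟨q, hq, h⟩ := h
  refine ⟨q, max 1 (∫ x, exp (‖x‖ ^ 2 / q) ∂μ), hq, le_max_left _ _, ⟨by fun_prop, ?_⟩,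
    le_max_right _ _⟩
  rwa [hasFiniteIntegral_iff_ofReal (ae_of_all _ fun x => (exp_pos _).le)]

lemma SubG.subGaussian {q C : ℝ} {μ : Measure V} (h : SubG q C μ) : SubGaussian d μ :=
  ⟨q, h.pos, (hasFiniteIntegral_iff_ofReal (ae_of_all _ fun x => (exp_pos _).le)).1 h.int.2⟩

/-- Two measures and a finite family share sub-Gaussian constants. -/
lemma exists_common_subG {K : ℕ} {αs : Fin K → Measure V} {μ ν : Measure V}
    (hα : ∀ k, SubGaussian d (αs k)) (hμ : SubGaussian d μ) (hν : SubGaussian d ν) :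
    ∃ q C, (∀ k, SubG q C (αs k)) ∧ SubG q C μ ∧ SubG q C ν := by
  choose q C hqC using fun k => exists_subG (hα k)
  obtain ⟨q₁, C₁, h₁⟩ := exists_subG hμ
  obtain ⟨q₂, C₂, h₂⟩ := exists_subG hν
  have hq0 : ∀ k ∈ Finset.univ, 0 ≤ q k := fun k _ => (hqC k).pos.le
  have hC0 : ∀ k ∈ Finset.univ, 0 ≤ C k := fun k _ => zero_le_one.trans (hqC k).one_le
  have hq := Finset.sum_nonneg hq0
  have hC := Finset.sum_nonneg hC0
  have := h₁.pos
  have := h₁.one_le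
  have := h₂.pos
  have := h₂.one_le
  refine ⟨∑ k, q k + q₁ + q₂, ∑ k, C k + C₁ + C₂, fun k => (hqC k).mono ?_ ?_,
    h₁.mono (by linarith) (by linarith), h₂.mono (by linarith) (by linarith)⟩
  · linarith [Finset.single_le_sum hq0 (Finset.mem_univ k)]
  · linarith [Finset.single_le_sum hC0 (Finset.mem_univ k)]

lemma Pot.mono {a c a' c' : ℝ} {A : V → ℝ} (h : Pot a c A) (ha : a ≤ a') (hc : c ≤ c') :
    Pot a' c' A := by
  refine ⟨h.convex, fun x => le_trans ?_ (h.lower x), fun x => (h.upper x).trans ?_⟩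
  · gcongr
  · gcongr

/-- One Sinkhorn equation, `exp (f x / ε) * ∫ exp ((g y - ‖x - y‖²) / ε) dβ(y) = 1` for all `x`. -/
def Sink (ε : ℝ) (β : Measure V) (f g : V → ℝ) : Prop :=
  ∀ x, exp (f x / ε) * ∫ y, exp ((g y - ‖x - y‖ ^ 2) / ε) ∂β = 1

lemma sink_iff (hε : 0 < ε) {β : Measure V} {f g : V → ℝ} :
    Sink ε β f g ↔
      Half (2 / ε) β (fun x => (‖x‖ ^ 2 - f x) / ε) (fun x => (‖x‖ ^ 2 - g x) / ε) := by
  refine forall_congr' fun x => ?_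
  have h1 : ∀ y, exp ((g y - ‖x - y‖ ^ 2) / ε) =
      exp (-(‖x‖ ^ 2 / ε)) * exp (2 / ε * ⟪y, x⟫ - (‖y‖ ^ 2 - g y) / ε) := fun y => by
    rw [← exp_add, norm_sub_sq_real, real_inner_comm]
    congr 1; field_simp; ring
  simp_rw [h1]
  rw [integral_const_mul, ← mul_assoc, ← exp_add]
  have h2 : f x / ε + -(‖x‖ ^ 2 / ε) = -((‖x‖ ^ 2 - f x) / ε) := by ring
  rw [h2, exp_neg, inv_mul_eq_one₀ (exp_pos _).ne']

lemma sink_of_half (hε : 0 < ε) {β : Measure V} {A B : V → ℝ} (h : Half (2 / ε) β A B) :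
    Sink ε β (fun x => ‖x‖ ^ 2 - ε * A x) (fun x => ‖x‖ ^ 2 - ε * B x) := by
  rw [sink_iff hε]
  have : ∀ a b : ℝ, (a - (a - ε * b)) / ε = b := fun a b => by field_simp; ring
  simpa only [this] using h

lemma undo (hε : 0 < ε) (a b : ℝ) : a - ε * ((a - b) / ε) = b := by field_simp; ring

lemma le_OTe_sink (hε : 0 < ε) {α β : Measure V} [IsProbabilityMeasure α] [IsProbabilityMeasure β]
    {f g : V → ℝ} (hf : Continuous f) (hg : Continuous g) (hfi : Integrable f α)
    (hgi : Integrable g β) (h : Sink ε α g f) :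
    ((∫ x, f x ∂α + ∫ y, g y ∂β : ℝ) : EReal) ≤ OTe d ε α β := by
  rw [sink_iff hε] at h
  have hA : Continuous fun x : V => (‖x‖ ^ 2 - f x) / ε := by fun_prop
  have hB : Continuous fun x : V => (‖x‖ ^ 2 - g x) / ε := by fun_prop
  have := le_OTe (d := d) hε hA hB (α := α) (β := β) (by simpa only [undo hε] using hfi)
    (by simpa only [undo hε] using hgi) (lintegral_gibbs' hA hB h).le
  simpa only [undo hε] using this

lemma OTe_eq_sink (hε : 0 < ε) {α β : Measure V} [IsProbabilityMeasure α]
    [IsProbabilityMeasure β] {f g : V → ℝ} (hf : Continuous f) (hg : Continuous g)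
    (hα : Integrable (fun x => ‖x‖ ^ 2) α) (hβ : Integrable (fun x => ‖x‖ ^ 2) β)
    (hfi : Integrable f α) (hgi : Integrable g β) (h₁ : Sink ε β f g) (h₂ : Sink ε α g f) :
    OTe d ε α β = ((∫ x, f x ∂α + ∫ y, g y ∂β : ℝ) : EReal) := by
  rw [sink_iff hε] at h₁ h₂
  have hA : Continuous fun x : V => (‖x‖ ^ 2 - f x) / ε := by fun_prop
  have hB : Continuous fun x : V => (‖x‖ ^ 2 - g x) / ε := by fun_prop
  have := OTe_eq (d := d) hε hA hB hα hβ ((hα.sub hfi).div_const ε) ((hβ.sub hgi).div_const ε)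
    h₁ h₂
  simpa only [undo hε] using this

/-- Subgradient inequality for `½ OT_ε(β, β)`, in terms of Sinkhorn potentials: the self-potential
`h'` of `β` has the smallest integral against `β`. -/
lemma self_sink_le (hε : 0 < ε) {α β : Measure V} [IsProbabilityMeasure α]
    [IsProbabilityMeasure β] {h h' : V → ℝ} (hc : Continuous h) (hc' : Continuous h')
    (e : Sink ε α h h) (e' : Sink ε β h' h') (hβ : Integrable (fun x => ‖x‖ ^ 2) β)
    (hi : Integrable h β) (hi' : Integrable h' β) :
    ∫ y, h' y ∂β ≤ ∫ y, h y ∂β := by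
  rw [sink_iff hε] at e e'
  have := self_le (by positivity : 0 < 2 / ε) (α := α) (β := β) (by fun_prop) (by fun_prop) e e'
    ((hβ.sub hi).div_const ε) ((hβ.sub hi').div_const ε)
  rw [integral_div, integral_div, div_le_div_iff_of_pos_right hε, integral_sub hβ hi,
    integral_sub hβ hi'] at this
  linarith

lemma Pot.sink_cont {a c : ℝ} {A : V → ℝ} (hA : Pot a c A) :
    Continuous fun x => ‖x‖ ^ 2 - ε * A x := by
  have := hA.continuous
  fun_prop

lemma Pot.sink_integrable {a c : ℝ} {A : V → ℝ} (hA : Pot a c A) {q C : ℝ} {μ : Measure V}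
    [IsProbabilityMeasure μ] (hμ : SubG q C μ) : Integrable (fun x => ‖x‖ ^ 2 - ε * A x) μ :=
  hμ.sq.1.sub ((hA.integrable hμ).const_mul ε)

/-- Entropic self-transport: `OT_ε(α, α) = 2 ∫ h dα` for a self-potential `h`. -/
lemma exists_self (hε : 0 < ε) {α : Measure V} [IsProbabilityMeasure α] (hα : SubGaussian d α) :
    ∃ h : V → ℝ, Continuous h ∧ Integrable h α ∧ Sink ε α h h ∧
      OTe d ε α α = ((2 * ∫ x, h x ∂α : ℝ) : EReal) := by
  obtain ⟨q, C, hq⟩ := exists_subG hα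
  obtain ⟨a, c, hac⟩ := exists_solution (E := V) (s := 2 / ε) (by positivity) hq.pos hq.one_le
  obtain ⟨A, B, hA, hB, h₁, h₂⟩ := hac α α inferInstance inferInstance hq hq
  obtain ⟨k, hk⟩ := exists_self_solution hq hA hB h₁ h₂
  have hc : Continuous fun x : V => ‖x‖ ^ 2 - ε * (B x + k) := by
    have := hB.continuous
    fun_prop
  have hi : Integrable (fun x : V => ‖x‖ ^ 2 - ε * (B x + k)) α :=
    hq.sq.1.sub (((hB.integrable hq).add (integrable_const k)).const_mul ε)
  refine ⟨_, hc, hi, sink_of_half hε hk, ?_⟩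
  rw [OTe_eq_sink hε hc hc hq.sq.1 hq.sq.1 hi hi (sink_of_half hε hk) (sink_of_half hε hk), two_mul]

lemma exists_OTe (hε : 0 < ε) {α β : Measure V} [IsProbabilityMeasure α] [IsProbabilityMeasure β]
    (hα : SubGaussian d α) (hβ : SubGaussian d β) : ∃ v : ℝ, OTe d ε α β = (v : EReal) := by
  obtain ⟨q, C, -, hqα, hqβ⟩ := exists_common_subG (K := 0) (αs := fun _ => α) (fun _ => hα) hα hβ
  obtain ⟨a, c, hac⟩ := exists_solution (E := V) (s := 2 / ε) (by positivity) hqα.pos hqα.one_le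
  obtain ⟨A, B, hA, hB, h₁, h₂⟩ := hac α β inferInstance inferInstance hqα hqβ
  exact ⟨_, OTe_eq hε hA.continuous hB.continuous hqα.sq.1 hqβ.sq.1 (hA.integrable hqα)
    (hB.integrable hqβ) h₁ h₂⟩

lemma sum_Sdiv {K : ℕ} {αs : Fin K → Measure V} {α : Measure V} {w v κ : Fin K → ℝ} {u : ℝ}
    (hw : ∑ k, w k = 1) (hv : ∀ k, OTe d ε (αs k) α = (v k : EReal))
    (hκ : ∀ k, OTe d ε (αs k) (αs k) = (κ k : EReal)) (hu : OTe d ε α α = ((2 * u : ℝ) : EReal)) :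
    ∑ k, ((w k : ℝ) : EReal) * Sdiv d ε (αs k) α =
      ((∑ k, w k * v k - 1 / 2 * ∑ k, w k * κ k - u : ℝ) : EReal) := by
  have h1 : ∀ k, ((w k : ℝ) : EReal) * Sdiv d ε (αs k) α =
      ((w k * (v k - 1 / 2 * κ k - 1 / 2 * (2 * u)) : ℝ) : EReal) := fun k => by
    rw [Sdiv, hv, hκ, hu]; norm_cast
  have h2 : ∀ (S : Finset (Fin K)) (r : Fin K → ℝ),
      ∑ k ∈ S, ((r k : ℝ) : EReal) = ((∑ k ∈ S, r k : ℝ) : EReal) := fun S r => by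
    induction S using Finset.induction_on with
    | empty => simp
    | insert k S hk ih => rw [Finset.sum_insert hk, Finset.sum_insert hk, ih, EReal.coe_add]
  simp_rw [h1]
  rw [h2]
  congr 1
  have h3 : ∀ k, w k * (v k - 1 / 2 * κ k - 1 / 2 * (2 * u)) =
      w k * v k - 1 / 2 * (w k * κ k) - w k * u := fun k => by ring
  simp_rw [h3]
  rw [Finset.sum_sub_distrib, Finset.sum_sub_distrib, ← Finset.sum_mul, hw, ← Finset.mul_sum,
    one_mul]

lemma integral_pairing {K : ℕ} {w : Fin K → ℝ} {g : Fin K → V → ℝ} {h : V → ℝ} {μ : Measure V}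
    (hg : ∀ k, Integrable (g k) μ) (hh : Integrable h μ) :
    ∫ x, (∑ k, w k * g k x) - h x ∂μ = ∑ k, w k * ∫ x, g k x ∂μ - ∫ x, h x ∂μ := by
  rw [integral_sub (integrable_finsetSum _ fun k _ => (hg k).const_mul _) hh,
    integral_finsetSum _ fun k _ => (hg k).const_mul _]
  simp_rw [integral_const_mul]

/-! ### First-order optimality -/

/-- `α⋆` minimizes the weighted sum of Sinkhorn divergences over sub-Gaussian probability measures.
-/
def IsBary (ε : ℝ) {K : ℕ} (αs : Fin K → Measure V) (w : Fin K → ℝ) (αstar : Measure V) : Prop :=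
  ∀ α : Measure V, IsProbabilityMeasure α → SubGaussian d α →
    ∑ k, ((w k : ℝ) : EReal) * Sdiv d ε (αs k) αstar
      ≤ ∑ k, ((w k : ℝ) : EReal) * Sdiv d ε (αs k) α

variable {K : ℕ} {αs : Fin K → Measure (EuclideanSpace ℝ (Fin d))}
  [∀ k, IsProbabilityMeasure (αs k)] {w : Fin K → ℝ}
  {αstar : Measure (EuclideanSpace ℝ (Fin d))} [IsProbabilityMeasure αstar]

/-- Sufficiency: the potentials of `α⋆` provide a subgradient of the convex objective. -/
lemma isBary_of_potentials (hε : 0 < ε) (hα : ∀ k, SubGaussian d (αs k)) (hw : ∀ k, 0 ≤ w k)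
    (hw1 : ∑ k, w k = 1) (hstar : SubGaussian d αstar) {f g : Fin K → V → ℝ} {h : V → ℝ}
    (hf : ∀ k, Continuous (f k)) (hg : ∀ k, Continuous (g k)) (hh : Continuous h)
    (hfi : ∀ k (μ : Measure V), IsProbabilityMeasure μ → SubGaussian d μ → Integrable (f k) μ)
    (hgi : ∀ k (μ : Measure V), IsProbabilityMeasure μ → SubGaussian d μ → Integrable (g k) μ)
    (hhi : ∀ μ : Measure V, IsProbabilityMeasure μ → SubGaussian d μ → Integrable h μ)
    (e₁ : ∀ k, Sink ε αstar (f k) (g k)) (e₂ : ∀ k, Sink ε (αs k) (g k) (f k))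
    (e₃ : Sink ε αstar h h)
    (hopt : ∀ β : Measure V, IsProbabilityMeasure β → SubGaussian d β →
      (∫ x, (∑ k, w k * g k x) - h x ∂β) - ∫ x, (∑ k, w k * g k x) - h x ∂αstar ≥ 0) :
    IsBary ε αs w αstar := by
  intro β hβp hβ
  have m2 : ∀ μ : Measure V, SubGaussian d μ → Integrable (fun x => ‖x‖ ^ 2) μ := fun μ hμ => by
    obtain ⟨q, C, hq⟩ := exists_subG hμ; exact hq.sq.1
  have hκ' : ∀ k, ∃ v : ℝ, OTe d ε (αs k) (αs k) = (v : EReal) := fun k =>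
    exists_OTe hε (hα k) (hα k)
  choose κ hκ using hκ'
  have hv' : ∀ k, ∃ v : ℝ, OTe d ε (αs k) β = (v : EReal) := fun k => exists_OTe hε (hα k) hβ
  choose v hv using hv'
  obtain ⟨h', hc', hi', e', hu⟩ := exists_self hε hβ
  have hi := hhi αstar inferInstance hstar
  have hv0 := fun k => OTe_eq_sink hε (hf k) (hg k) (m2 _ (hα k)) (m2 _ hstar)
    (hfi k _ inferInstance (hα k)) (hgi k _ inferInstance hstar) (e₁ k) (e₂ k)
  have hu0 := OTe_eq_sink hε hh hh (m2 _ hstar) (m2 _ hstar) hi hi e₃ e₃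
  rw [← two_mul] at hu0
  rw [sum_Sdiv hw1 hv0 hκ hu0, sum_Sdiv hw1 hv hκ hu, EReal.coe_le_coe_iff]
  have hle : ∀ k, ∫ x, f k x ∂(αs k) + ∫ y, g k y ∂β ≤ v k := fun k => by
    rw [← EReal.coe_le_coe_iff, ← hv k]
    exact le_OTe_sink hε (hf k) (hg k) (hfi k _ inferInstance (hα k)) (hgi k _ hβp hβ) (e₂ k)
  have hle' := self_sink_le hε hh hc' e₃ e' (m2 _ hβ) (hhi _ hβp hβ) hi'
  have hsum := Finset.sum_le_sum fun k (_ : k ∈ Finset.univ) =>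
    mul_le_mul_of_nonneg_left (hle k) (hw k)
  have := hopt β hβp hβ
  rw [integral_pairing (fun k => hgi k _ hβp hβ) (hhi _ hβp hβ),
    integral_pairing (fun k => hgi k _ inferInstance hstar) hi] at this
  simp only [mul_add, Finset.sum_add_distrib] at hsum ⊢
  linarith

/-- First-order condition at a positive parameter `t`, tested on the potentials of the mixture
`(1 - t) α⋆ + t β`. These are feasible dual competitors at `α⋆`, so the increase of the objective
from `α⋆` to the mixture, nonnegative by minimality, is at most `t` times the pairing of
`∑ wₖ gₖ - h` with `β - α⋆`. -/
lemma variation (hε : 0 < ε) (hα : ∀ k, SubGaussian d (αs k)) (hw : ∀ k, 0 ≤ w k)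
    (hw1 : ∑ k, w k = 1) (hmin : IsBary ε αs w αstar) {q C : ℝ} (hqα : ∀ k, SubG q C (αs k))
    (hqs : SubG q C αstar) {β : Measure V} [IsProbabilityMeasure β] (hqβ : SubG q C β) {t : ℝ}
    (ht0 : 0 < t) (ht1 : t ≤ 1) {a c : ℝ} {A B : Fin K → V → ℝ} (hA : ∀ k, Pot a c (A k))
    (hB : ∀ k, Pot a c (B k)) (hAB : ∀ k, Half (2 / ε) (mix t αstar β) (A k) (B k))
    (hBA : ∀ k, Half (2 / ε) (αs k) (B k) (A k)) {P Q : V → ℝ} (hP : Pot a c P) (hQ : Pot a c Q)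
    (hPQ : Half (2 / ε) (mix t αstar β) P Q) (hQP : Half (2 / ε) (mix t αstar β) Q P) :
    0 ≤ (∫ x, Q x ∂β - ∫ x, Q x ∂αstar) -
      ∑ k, w k * (∫ x, B k x ∂β - ∫ x, B k x ∂αstar) := by
  have hqt := mix_subG ht0.le ht1 hqs hqβ
  have hpt : IsProbabilityMeasure (mix t αstar β) := mix_prob ht0.le ht1
  obtain ⟨r, hr⟩ := exists_self_solution hqt hP hQ hPQ hQP
  set f : Fin K → V → ℝ := fun k x => ‖x‖ ^ 2 - ε * A k x with hf
  set g : Fin K → V → ℝ := fun k x => ‖x‖ ^ 2 - ε * B k x with hg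
  set h : V → ℝ := fun x => ‖x‖ ^ 2 - ε * (Q x + r) with hh
  have hhc : Continuous h := by
    have := hQ.continuous
    fun_prop
  have hgv : ∀ k (μ : Measure V) [IsProbabilityMeasure μ], SubG q C μ →
      ∫ x, g k x ∂μ = ∫ x, ‖x‖ ^ 2 ∂μ - ε * ∫ x, B k x ∂μ := fun k μ _ hμ => by
    rw [hg, integral_sub hμ.sq.1 (((hB k).integrable hμ).const_mul ε), integral_const_mul]
  have hQr : ∀ (μ : Measure V) [IsProbabilityMeasure μ], SubG q C μ →
      Integrable (fun x => Q x + r) μ := fun μ _ hμ =>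
    (hQ.integrable hμ).add (integrable_const r)
  have hhi : ∀ (μ : Measure V) [IsProbabilityMeasure μ], SubG q C μ → Integrable h μ :=
    fun μ _ hμ => hμ.sq.1.sub ((hQr μ hμ).const_mul ε)
  have hhv : ∀ (μ : Measure V) [IsProbabilityMeasure μ], SubG q C μ →
      ∫ x, h x ∂μ = ∫ x, ‖x‖ ^ 2 ∂μ - ε * (∫ x, Q x ∂μ + r) := fun μ _ hμ => by
    rw [hh, integral_sub hμ.sq.1 ((hQr μ hμ).const_mul ε), integral_const_mul,
      integral_add (hQ.integrable hμ) (integrable_const r)]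
    simp
  have e₁ := fun k => sink_of_half hε (hAB k)
  have e₂ := fun k => sink_of_half hε (hBA k)
  have e₃ := sink_of_half hε hr
  have hκ' : ∀ k, ∃ v : ℝ, OTe d ε (αs k) (αs k) = (v : EReal) := fun k =>
    exists_OTe hε (hα k) (hα k)
  choose κ hκ using hκ'
  have hv' : ∀ k, ∃ v : ℝ, OTe d ε (αs k) αstar = (v : EReal) := fun k =>
    exists_OTe hε (hα k) hqs.subGaussian
  choose v hv using hv'
  obtain ⟨h', hc', hi', e', hu⟩ := exists_self hε hqs.subGaussian
  have hvt := fun k => OTe_eq_sink hε ((hA k).sink_cont (ε := ε)) ((hB k).sink_cont (ε := ε))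
    (hqα k).sq.1 hqt.sq.1 ((hA k).sink_integrable (hqα k)) ((hB k).sink_integrable hqt) (e₁ k) (e₂ k)
  have hut := OTe_eq_sink hε hhc hhc hqt.sq.1 hqt.sq.1 (hhi _ hqt) (hhi _ hqt) e₃ e₃
  rw [← two_mul] at hut
  have hm := hmin _ hpt hqt.subGaussian
  rw [sum_Sdiv hw1 hv hκ hu, sum_Sdiv hw1 hvt hκ hut, EReal.coe_le_coe_iff] at hm
  have hle : ∀ k, ∫ x, f k x ∂(αs k) + ∫ y, g k y ∂αstar ≤ v k := fun k => by
    rw [← EReal.coe_le_coe_iff, ← hv k]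
    exact le_OTe_sink hε (hA k).sink_cont (hB k).sink_cont ((hA k).sink_integrable (hqα k))
      ((hB k).sink_integrable hqs) (e₂ k)
  have hle' := self_sink_le hε hhc hc' e₃ e' hqs.sq.1 (hhi _ hqs) hi'
  have hgt : ∀ k, ∫ x, g k x ∂(mix t αstar β) =
      ∫ x, g k x ∂αstar + t * (∫ x, g k x ∂β - ∫ x, g k x ∂αstar) := fun k => by
    rw [mix_integral ht0.le ht1 ((hB k).sink_integrable hqs) ((hB k).sink_integrable hqβ)]; ring
  have hht : ∫ x, h x ∂(mix t αstar β) =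
      ∫ x, h x ∂αstar + t * (∫ x, h x ∂β - ∫ x, h x ∂αstar) := by
    rw [mix_integral ht0.le ht1 (hhi _ hqs) (hhi _ hqβ)]; ring
  have hm2 : ∑ k, w k * v k ≤ ∑ k, w k * (v k + t * (∫ x, g k x ∂β - ∫ x, g k x ∂αstar)) -
      t * (∫ x, h x ∂β - ∫ x, h x ∂αstar) := by
    have h1 : ∑ k, w k * (∫ x, f k x ∂(αs k) + ∫ y, g k y ∂(mix t αstar β)) ≤
        ∑ k, w k * (v k + t * (∫ x, g k x ∂β - ∫ x, g k x ∂αstar)) :=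
      Finset.sum_le_sum fun k _ => mul_le_mul_of_nonneg_left (by linarith [hgt k, hle k]) (hw k)
    have h2 : ∑ k, w k * (∫ x, f k x ∂(αs k) + ∫ y, g k y ∂(mix t αstar β)) = _ := rfl
    linarith
  have h4 : ∀ k, w k * (v k + t * (∫ x, g k x ∂β - ∫ x, g k x ∂αstar)) = w k * v k +
      t * (w k * (∫ x, ‖x‖ ^ 2 ∂β - ∫ x, ‖x‖ ^ 2 ∂αstar)) -
      t * (ε * (w k * (∫ x, B k x ∂β - ∫ x, B k x ∂αstar))) := fun k => by
    rw [hgv k β hqβ, hgv k αstar hqs]; ring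
  simp_rw [h4] at hm2
  rw [Finset.sum_sub_distrib, Finset.sum_add_distrib, ← Finset.mul_sum, ← Finset.mul_sum,
    ← Finset.mul_sum, ← Finset.sum_mul, hw1, hhv β hqβ, hhv αstar hqs] at hm2
  have h5 : 0 ≤ t * ε * ((∫ x, Q x ∂β - ∫ x, Q x ∂αstar) -
      ∑ k, w k * (∫ x, B k x ∂β - ∫ x, B k x ∂αstar)) := by linarith
  exact (mul_nonneg_iff_of_pos_left (by positivity)).1 h5

/-- The first-order condition at `α⋆`, obtained from `variation` as `t → 0` by stability of the
potentials. -/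
lemma first_order (hε : 0 < ε) (hα : ∀ k, SubGaussian d (αs k)) (hw : ∀ k, 0 ≤ w k)
    (hw1 : ∑ k, w k = 1) (hmin : IsBary ε αs w αstar) (hs : SubGaussian d αstar) {a c : ℝ}
    {A B : Fin K → V → ℝ} (hA : ∀ k, Pot a c (A k))
    (hB : ∀ k, Pot a c (B k)) (hAB : ∀ k, Half (2 / ε) αstar (A k) (B k))
    (hBA : ∀ k, Half (2 / ε) (αs k) (B k) (A k)) {P Q : V → ℝ} (hP : Pot a c P) (hQ : Pot a c Q)
    (hPQ : Half (2 / ε) αstar P Q) (hQP : Half (2 / ε) αstar Q P) {β : Measure V}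
    [IsProbabilityMeasure β] (hβ : SubGaussian d β) :
    0 ≤ (∫ x, Q x ∂β - ∫ x, Q x ∂αstar) -
      ∑ k, w k * (∫ x, B k x ∂β - ∫ x, B k x ∂αstar) := by
  obtain ⟨q, C, hqα, hqs, hqβ⟩ := exists_common_subG hα hs hβ
  have hs0 : 0 ≤ 2 / ε := by positivity
  obtain ⟨a', c', hac⟩ := exists_solution (E := V) hs0 hqs.pos hqs.one_le
  set t : ℕ → ℝ := fun n => 1 / ((n : ℝ) + 1) with ht
  have ht0 : ∀ n, 0 < t n := fun n => by positivity
  have ht1 : ∀ n, t n ≤ 1 := fun n => by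
    rw [ht]; simp only
    rw [div_le_one (by positivity)]
    have : (0 : ℝ) ≤ n := n.cast_nonneg
    linarith
  have htl : Tendsto t atTop (𝓝 0) := tendsto_one_div_add_atTop_nhds_zero_nat
  have hpt : ∀ n, IsProbabilityMeasure (mix (t n) αstar β) := fun n => mix_prob (ht0 n).le (ht1 n)
  have hqt : ∀ n, SubG q C (mix (t n) αstar β) := fun n => mix_subG (ht0 n).le (ht1 n) hqs hqβ
  have hsol := fun (n : ℕ) (k : Fin K) =>
    hac (αs k) (mix (t n) αstar β) inferInstance (hpt n) (hqα k) (hqt n)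
  choose A' B' hA' hB' hAB' hBA' using hsol
  have hsol' := fun n : ℕ =>
    hac (mix (t n) αstar β) (mix (t n) αstar β) (hpt n) (hpt n) (hqt n) (hqt n)
  choose P' Q' hP' hQ' hPQ' hQP' using hsol'
  have up : ∀ {F : V → ℝ}, Pot a c F → Pot (max a a') (max c c') F := fun hF =>
    hF.mono (le_max_left _ _) (le_max_left _ _)
  have up' : ∀ {F : V → ℝ}, Pot a' c' F → Pot (max a a') (max c c') F := fun hF =>
    hF.mono (le_max_right _ _) (le_max_right _ _)
  have l1 : Tendsto (fun n => ∫ x, Q' n x ∂β - ∫ x, Q' n x ∂αstar) atTop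
      (𝓝 (∫ x, Q x ∂β - ∫ x, Q x ∂αstar)) :=
    solution_stable hs0 hqs hqβ hqs hqβ (fun n => (ht0 n).le) ht1 htl (fun n => up' (hP' n))
      (fun n => up' (hQ' n)) hPQ' hQP' (up hP) (up hQ) hPQ hQP hqβ hqs
  -- the marginal `αs k` does not move: it is a constant mixture with itself
  have l2 : ∀ k, Tendsto (fun n => ∫ x, B' n k x ∂β - ∫ x, B' n k x ∂αstar) atTop
      (𝓝 (∫ x, B k x ∂β - ∫ x, B k x ∂αstar)) := fun k =>
    solution_stable hs0 (hqα k) (hqα k) hqs hqβ (fun n => (ht0 n).le) ht1 htl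
      (fun n => up' (hA' n k)) (fun n => up' (hB' n k)) (fun n => hAB' n k)
      (fun n => by rw [mix_self (ht0 n).le (ht1 n)]; exact hBA' n k)
      (up (hA k)) (up (hB k)) (hAB k) (hBA k) hqβ hqs
  have l3 := l1.sub (tendsto_finsetSum Finset.univ fun k _ => (l2 k).const_mul (w k))
  refine ge_of_tendsto' l3 fun n => ?_
  exact variation hε hα hw hw1 hmin hqα hqs hqβ (ht0 n) (ht1 n) (hA' n) (hB' n) (hAB' n) (hBA' n)
    (hP' n) (hQ' n) (hPQ' n) (hQP' n)

/-- Necessity: a barycenter admits potentials satisfying the optimality system. -/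
lemma potentials_of_isBary (hε : 0 < ε) (hα : ∀ k, SubGaussian d (αs k)) (hw : ∀ k, 0 ≤ w k)
    (hw1 : ∑ k, w k = 1) (hs : SubGaussian d αstar) (hmin : IsBary ε αs w αstar) :
    ∃ (f g : Fin K → V → ℝ) (h : V → ℝ),
      (∀ k, Continuous (f k) ∧ Continuous (g k)) ∧ Continuous h ∧
      (∀ k, ∀ μ : Measure V, IsProbabilityMeasure μ → SubGaussian d μ →
        Integrable (f k) μ ∧ Integrable (g k) μ) ∧
      (∀ μ : Measure V, IsProbabilityMeasure μ → SubGaussian d μ → Integrable h μ) ∧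
      (∀ k, Sink ε αstar (f k) (g k)) ∧ (∀ k, Sink ε (αs k) (g k) (f k)) ∧ Sink ε αstar h h ∧
      (∀ β : Measure V, IsProbabilityMeasure β → SubGaussian d β →
        (∫ x, (∑ k, w k * g k x) - h x ∂β)
          - ∫ x, (∑ k, w k * g k x) - h x ∂αstar ≥ 0) := by
  obtain ⟨q, C, hqα, hqs, -⟩ := exists_common_subG hα hs hs
  obtain ⟨a, c, hac⟩ := exists_solution (E := V) (s := 2 / ε) (by positivity) hqs.pos hqs.one_le
  have hsol := fun k => hac (αs k) αstar inferInstance inferInstance (hqα k) hqs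
  choose A B hA hB hAB hBA using hsol
  obtain ⟨P, Q, hP, hQ, hPQ, hQP⟩ := hac αstar αstar inferInstance inferInstance hqs hqs
  obtain ⟨r, hr⟩ := exists_self_solution hqs hP hQ hPQ hQP
  have hgi : ∀ k (μ : Measure V), IsProbabilityMeasure μ → SubGaussian d μ →
      Integrable (fun x => ‖x‖ ^ 2 - ε * B k x) μ := fun k μ _ hμ => by
    obtain ⟨q', C', h'⟩ := exists_subG hμ
    exact (hB k).sink_integrable h'
  have hhi : ∀ μ : Measure V, IsProbabilityMeasure μ → SubGaussian d μ →
      Integrable (fun x => ‖x‖ ^ 2 - ε * (Q x + r)) μ := fun μ _ hμ => by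
    obtain ⟨q', C', h'⟩ := exists_subG hμ
    exact h'.sq.1.sub (((hQ.integrable h').add (integrable_const r)).const_mul ε)
  have hQc := hQ.continuous
  refine ⟨fun k x => ‖x‖ ^ 2 - ε * A k x, fun k x => ‖x‖ ^ 2 - ε * B k x,
    fun x => ‖x‖ ^ 2 - ε * (Q x + r), fun k => ⟨(hA k).sink_cont, (hB k).sink_cont⟩, by fun_prop,
    fun k μ hμp hμ => ⟨?_, hgi k μ hμp hμ⟩, hhi, fun k => sink_of_half hε (hAB k),
    fun k => sink_of_half hε (hBA k), sink_of_half hε hr, fun β hβp hβ => ?_⟩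
  · obtain ⟨q', C', h'⟩ := exists_subG hμ
    exact (hA k).sink_integrable h'
  · have key := first_order hε hα hw hw1 hmin hs hA hB hAB hBA hP hQ hPQ hQP hβ
    -- the quadratic parts cancel because the weights sum to one
    have hval : ∀ μ : Measure V, IsProbabilityMeasure μ → SubGaussian d μ →
        ∫ x, (∑ k, w k * (‖x‖ ^ 2 - ε * B k x)) - (‖x‖ ^ 2 - ε * (Q x + r)) ∂μ =
          ε * (∫ x, Q x ∂μ + r) - ε * ∑ k, w k * ∫ x, B k x ∂μ := fun μ hμp hμ => by
      obtain ⟨q', C', h'⟩ := exists_subG hμ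
      have hQi := hQ.integrable h'
      have hBi := fun k => (hB k).integrable h'
      have hQr : Integrable (fun x => Q x + r) μ := hQi.add (integrable_const r)
      have e1 : ∀ x : V, (∑ k, w k * (‖x‖ ^ 2 - ε * B k x)) - (‖x‖ ^ 2 - ε * (Q x + r)) =
          ε * (Q x + r) - ∑ k, (ε * w k) * B k x := fun x => by
        have : ∀ k, w k * (‖x‖ ^ 2 - ε * B k x) = w k * ‖x‖ ^ 2 - (ε * w k) * B k x :=
          fun k => by ring
        simp_rw [this]
        rw [Finset.sum_sub_distrib, ← Finset.sum_mul, hw1]; ring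
      simp_rw [e1]
      rw [integral_sub (hQr.const_mul ε)
        (integrable_finsetSum _ fun k _ => (hBi k).const_mul _), integral_const_mul,
        integral_add hQi (integrable_const r),
        integral_finsetSum _ fun k _ => (hBi k).const_mul _]
      simp_rw [integral_const_mul, mul_assoc]
      rw [← Finset.mul_sum]
      simp
    rw [hval β hβp hβ, hval αstar inferInstance hs]
    simp_rw [mul_sub] at key
    rw [Finset.sum_sub_distrib] at key
    have := mul_nonneg hε.le key
    linarith

end Cost

end SinkhornBarycenter

/-- a sub-Gaussian probability measure `α⋆` minimizes
`α ↦ Σ_k w_k S_ε(α_k, α)` over sub-Gaussian probability measures iff there exist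
continuous potentials `f_k, g_k, h`, integrable against every sub-Gaussian probability
measure, satisfying the Sinkhorn fixed-point equations and the autocorrelation equation
everywhere, together with the first-order optimality inequality
`⟨Σ_k w_k g_k − h, β - α⋆⟩ ≥ 0` for every sub-Gaussian probability measure `β`. -/
theorem sinkhorn_divergence_barycenter_characterization (d : ℕ) (ε : ℝ) (hε : 0 < ε)
    (K : ℕ) (hK : 1 ≤ K) (αs : Fin K → Measure (EuclideanSpace ℝ (Fin d)))
    (hαs : ∀ k, IsProbabilityMeasure (αs k) ∧ SubGaussian d (αs k))
    (w : Fin K → ℝ) (hw : ∀ k, 0 ≤ w k) (hwsum : ∑ k, w k = 1)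
    (αstar : Measure (EuclideanSpace ℝ (Fin d)))
    (hαstar : IsProbabilityMeasure αstar) (hαstarG : SubGaussian d αstar) :
    (∀ α : Measure (EuclideanSpace ℝ (Fin d)),
        IsProbabilityMeasure α → SubGaussian d α →
        ∑ k, ((w k : ℝ) : EReal) * Sdiv d ε (αs k) αstar
          ≤ ∑ k, ((w k : ℝ) : EReal) * Sdiv d ε (αs k) α)
      ↔
    ∃ (f g : Fin K → EuclideanSpace ℝ (Fin d) → ℝ)
      (h : EuclideanSpace ℝ (Fin d) → ℝ),
      (∀ k, Continuous (f k) ∧ Continuous (g k)) ∧ Continuous h ∧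
      (∀ k, ∀ μ : Measure (EuclideanSpace ℝ (Fin d)),
        IsProbabilityMeasure μ → SubGaussian d μ →
        Integrable (f k) μ ∧ Integrable (g k) μ) ∧
      (∀ μ : Measure (EuclideanSpace ℝ (Fin d)),
        IsProbabilityMeasure μ → SubGaussian d μ → Integrable h μ) ∧
      (∀ k, ∀ x, Real.exp (f k x / ε) *
        ∫ y, Real.exp ((g k y - ‖x - y‖ ^ 2) / ε) ∂αstar = 1) ∧
      (∀ k, ∀ y, Real.exp (g k y / ε) *
        ∫ x, Real.exp ((f k x - ‖x - y‖ ^ 2) / ε) ∂(αs k) = 1) ∧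
      (∀ x, Real.exp (h x / ε) *
        ∫ y, Real.exp ((h y - ‖x - y‖ ^ 2) / ε) ∂αstar = 1) ∧
      (∀ β : Measure (EuclideanSpace ℝ (Fin d)),
        IsProbabilityMeasure β → SubGaussian d β →
        (∫ x, (∑ k, w k * g k x) - h x ∂β)
          - ∫ x, (∑ k, w k * g k x) - h x ∂αstar ≥ 0) := by
  have := fun k => (hαs k).1
  have hα := fun k => (hαs k).2
  have hsymm : ∀ (μ : Measure (EuclideanSpace ℝ (Fin d)))
      (f g : EuclideanSpace ℝ (Fin d) → ℝ), SinkhornBarycenter.Sink ε μ g f ↔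
        ∀ y, Real.exp (g y / ε) * ∫ x, Real.exp ((f x - ‖x - y‖ ^ 2) / ε) ∂μ = 1 :=
    fun μ f g => forall_congr' fun y => by simp_rw [norm_sub_rev y]
  constructor
  · intro hmin
    obtain ⟨f, g, h, hc, hh, hi, hhi, e₁, e₂, e₃, hopt⟩ :=
      SinkhornBarycenter.potentials_of_isBary hε hα hw hwsum hαstarG hmin
    exact ⟨f, g, h, hc, hh, hi, hhi, e₁, fun k => (hsymm _ _ _).1 (e₂ k), e₃, hopt⟩
  · rintro ⟨f, g, h, hc, hh, hi, hhi, e₁, e₂, e₃, hopt⟩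
    exact SinkhornBarycenter.isBary_of_potentials hε hα hw hwsum hαstarG (fun k => (hc k).1)
      (fun k => (hc k).2) hh (fun k μ hμ hμ' => (hi k μ hμ hμ').1)
      (fun k μ hμ hμ' => (hi k μ hμ hμ').2) hhi e₁ (fun k => (hsymm _ _ _).2 (e₂ k)) e₃ hopt
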